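/- Let s ≥ 2 and let f : [-1,1] → ℝ be a continuous function of class X^s. Then there is a constant C > 0 (depending only on f and s) such that for every n ≥ 1 the error of the n-point Gauss rule satisfies |E_n^G(f)| ≤ C · n^{-s-1}. -/

import Mathlib

/-- The `m`-th Chebyshev coefficient of `f`:
`a_m = (2/π) ∫_0^π f(cos θ) cos(mθ) dθ`. -/
noncomputable def chebCoeff (f : ℝ → ℝ) (m : ℕ) : ℝ :=
  (2 / Real.pi) * ∫ θ in (0:ℝ)..Real.pi, f (Real.cos θ) * Real.cos (m * θ)

/-!
Expanding `f` in Chebyshev polynomials, `E_n(f) = ∑ a_m E_n(T_m)`, where `E_n(T_m) = 0` for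
`m ≤ 2n - 1`.  Since `|a_m| = O(m ^ (-s-1))`, the rate follows for every `s > 1` once the sum of
`|E_n(T_m)|` over the block of `2n + 1` indices centred at `r(2n + 1)` is `O(r)`.  As
`∫ T_m = O(m⁻²)`, this concerns the sums `∑ w_k cos (m θ_k)` with `x_k = cos θ_k`.

The nodal polynomial `P` solves Legendre's equation, so `y θ = √(sin θ) P(cos θ)` satisfies
`y'' + (L² + 1 / (4 sin² θ)) y = 0` with `L = n + 1/2`.  Sturm comparison makes the angles `θ_k`
quasi-uniform of step `h = π / L`.  The amplitude `Z = (y' + i L y) e^{-iLθ}` varies slowly, has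
phase determined by `e^{-iLθ_k}` at the nodes, and `w_k = c sin θ_k / |Z(θ_k)|²`, so
`w_k e^{i r(2n+1)θ_k}` is the value at `θ_k` of the slowly varying function
`c sin θ · conj(Z)^{r-1} / Z^{r+1}`.  For coefficients varying this slowly, summation by parts and
the large sieve inequality bound the exponential sums over the block.
-/

open Polynomial Finset
open scoped Real ComplexConjugate

section Legendre

/-- The linear functional `p ↦ ∫_{-1}^1 p`, whose form `p, q ↦ legendreIntegral (p * q)` is the
Legendre inner product. -/
noncomputable def legendreIntegral : ℝ[X] →ₗ[ℝ] ℝ where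
  toFun p := ∫ t in (-1 : ℝ)..1, p.eval t
  map_add' p q := by
    simp only [eval_add]
    exact intervalIntegral.integral_add (p.continuous.intervalIntegrable _ _)
      (q.continuous.intervalIntegrable _ _)
  map_smul' c p := by simp

lemma legendreIntegral_apply (p : ℝ[X]) :
    legendreIntegral p = ∫ t in (-1 : ℝ)..1, p.eval t := rfl

lemma legendreIntegral_C_mul (c : ℝ) (p : ℝ[X]) :
    legendreIntegral (C c * p) = c * legendreIntegral p := by
  rw [← smul_eq_C_mul, map_smul, smul_eq_mul]

lemma legendreIntegral_derivative (p : ℝ[X]) :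
    legendreIntegral (derivative p) = p.eval 1 - p.eval (-1) :=
  intervalIntegral.integral_eq_sub_of_hasDerivAt (fun t _ => p.hasDerivAt t)
    ((derivative p).continuous.intervalIntegrable _ _)

lemma legendreIntegral_mul_self_pos {p : ℝ[X]} (hp : p ≠ 0) : 0 < legendreIntegral (p * p) := by
  obtain ⟨t, ht, hpt⟩ := (Set.Icc_infinite (by norm_num : (-1 : ℝ) < 1)).exists_notMem_finset
    p.roots.toFinset
  have hne : p.eval t ≠ 0 := fun h => hpt (by simpa [hp] using h)
  refine intervalIntegral.integral_pos (by norm_num) (p * p).continuous.continuousOn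
    (fun u _ => ?_) ⟨t, ht, ?_⟩
  · simpa only [eval_mul] using mul_self_nonneg _
  · simpa only [eval_mul] using mul_self_pos.mpr hne

/-- The Legendre differential operator `p ↦ ((1 - X²) p')'`. -/
noncomputable def legendreOp (p : ℝ[X]) : ℝ[X] := derivative ((1 - X ^ 2) * derivative p)

lemma legendreOp_eq (p : ℝ[X]) :
    legendreOp p = (1 - X ^ 2) * derivative (derivative p) - 2 * X * derivative p := by
  simp only [legendreOp, derivative_mul, derivative_sub, derivative_one, derivative_X_pow]
  simp only [Nat.cast_ofNat, C_ofNat, Nat.add_one_sub_one, pow_one]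
  ring

lemma coeff_legendreOp (p : ℝ[X]) (k : ℕ) :
    (legendreOp p).coeff k = (k + 1) * (k + 2) * p.coeff (k + 2) - k * (k + 1) * p.coeff k := by
  have hX : (X ^ 2 * derivative p).coeff (k + 1) = k * p.coeff k := by
    cases k with
    | zero => simp [coeff_X_pow_mul']
    | succ k => rw [coeff_X_pow_mul (derivative p) 2 k, coeff_derivative, Nat.cast_succ, mul_comm]
  rw [legendreOp, coeff_derivative, sub_mul, one_mul, coeff_sub, hX, coeff_derivative]
  push_cast
  ring

lemma degree_legendreOp_le (p : ℝ[X]) : (legendreOp p).degree ≤ p.degree := by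
  refine degree_le_iff_coeff_zero _ _ |>.mpr fun k hk => ?_
  rw [coeff_legendreOp, coeff_eq_zero_of_degree_lt hk, coeff_eq_zero_of_degree_lt
    (hk.trans_le (Nat.cast_le.mpr (Nat.le_add_right k 2)))]
  ring

lemma legendreIntegral_legendreOp_mul (p q : ℝ[X]) :
    legendreIntegral (legendreOp p * q) =
      -legendreIntegral ((1 - X ^ 2) * derivative p * derivative q) := by
  have h := legendreIntegral_derivative ((1 - X ^ 2) * derivative p * q)
  rw [derivative_mul, map_add] at h
  simp only [eval_mul, eval_sub, eval_one, eval_pow, eval_X, one_pow, neg_one_sq, sub_self,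
    zero_mul] at h
  rw [legendreOp]
  linarith

lemma legendreIntegral_mul_legendreOp (p q : ℝ[X]) :
    legendreIntegral (p * legendreOp q) = legendreIntegral (legendreOp p * q) := by
  rw [mul_comm p, legendreIntegral_legendreOp_mul, legendreIntegral_legendreOp_mul,
    mul_right_comm]

/-- `P` is the monic Legendre polynomial of degree `n`, characterised by orthogonality. -/
structure IsMonicLegendre (n : ℕ) (P : ℝ[X]) : Prop where
  monic : P.Monic
  natDegree_eq : P.natDegree = n
  orthogonal : ∀ q : ℝ[X], q.degree < n → legendreIntegral (P * q) = 0

namespace IsMonicLegendre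

variable {n : ℕ} {P : ℝ[X]}

lemma coeff_self (hP : IsMonicLegendre n P) : P.coeff n = 1 := by
  simpa [hP.natDegree_eq] using hP.monic.coeff_natDegree

lemma legendreIntegral_mul (hP : IsMonicLegendre n P) {q : ℝ[X]} (hq : q.natDegree ≤ n) :
    legendreIntegral (P * q) = q.coeff n * legendreIntegral (P * P) := by
  have hdeg : (q - C (q.coeff n) * P).degree < n := by
    refine degree_lt_iff_coeff_zero _ _ |>.mpr fun k hk => ?_
    rcases hk.eq_or_lt with rfl | hlt
    · simp [hP.coeff_self]
    · simp [coeff_eq_zero_of_natDegree_lt (hq.trans_lt hlt),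
        coeff_eq_zero_of_natDegree_lt (hP.natDegree_eq.trans_lt hlt)]
  have h := hP.orthogonal _ hdeg
  rw [mul_sub, map_sub, mul_left_comm, legendreIntegral_C_mul] at h
  linarith

-- `D = legendreOp P + n (n + 1) P` has degree `< n`, so it is orthogonal to `P` and, the operator
-- being self-adjoint, also to `legendreOp P`, hence to itself.
theorem legendreOp_eq_neg_mul (hP : IsMonicLegendre n P) :
    legendreOp P = -(C ((n : ℝ) * (n + 1)) * P) := by
  set D := legendreOp P + C ((n : ℝ) * (n + 1)) * P with hD
  have hdeg : D.degree < n := by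
    refine degree_lt_iff_coeff_zero _ _ |>.mpr fun k hk => ?_
    have hzero : ∀ j, n < j → P.coeff j = 0 := fun j hj =>
      coeff_eq_zero_of_natDegree_lt (hP.natDegree_eq.trans_lt hj)
    rw [hD, coeff_add, coeff_C_mul, coeff_legendreOp, hzero (k + 2) (by lia)]
    rcases hk.eq_or_lt with rfl | hlt
    · ring
    · rw [hzero k hlt]; ring
  have hDD : legendreIntegral (D * D) = 0 := by
    have hsplit : D * D = legendreOp P * D + C ((n : ℝ) * (n + 1)) * (P * D) := by
      nth_rewrite 1 [hD]; ring
    rw [hsplit, map_add, legendreIntegral_C_mul, ← legendreIntegral_mul_legendreOp,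
      hP.orthogonal _ hdeg, hP.orthogonal _ ((degree_legendreOp_le D).trans_lt hdeg)]
    ring
  have hzero : D = 0 := by_contra fun h => (legendreIntegral_mul_self_pos h).ne' hDD
  exact eq_neg_of_add_eq_zero_left hzero

lemma natDegree_one_sub_sq_mul_derivative_mul_le {m : ℕ} (hP : IsMonicLegendre (m + 1) P)
    {g : ℝ[X]} (hg : g.natDegree ≤ m) :
    ((1 - X ^ 2) * derivative P * g).natDegree ≤ 2 * (m + 1) := by
  have hX : (1 - X ^ 2 : ℝ[X]).natDegree ≤ 2 := by compute_degree
  have hdP : (derivative P).natDegree ≤ m :=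
    (natDegree_derivative_le P).trans_eq (by rw [hP.natDegree_eq, Nat.add_sub_cancel])
  exact (natDegree_mul_le_of_le (natDegree_mul_le_of_le hX hdP) hg).trans_eq (by ring)

lemma coeff_one_sub_sq_mul_derivative_mul {m : ℕ} (hP : IsMonicLegendre (m + 1) P)
    {g : ℝ[X]} (hg : g.natDegree ≤ m) :
    ((1 - X ^ 2) * derivative P * g).coeff (2 * (m + 1)) = -((m + 1) * g.coeff m) := by
  have hX : (1 - X ^ 2 : ℝ[X]).natDegree ≤ 2 := by compute_degree
  have hdP : (derivative P).natDegree ≤ m :=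
    (natDegree_derivative_le P).trans_eq (by rw [hP.natDegree_eq, Nat.add_sub_cancel])
  rw [show 2 * (m + 1) = (2 + m) + m by ring,
    coeff_mul_add_eq_of_natDegree_le (natDegree_mul_le_of_le hX hdP) hg,
    coeff_mul_add_eq_of_natDegree_le hX hdP, coeff_derivative, hP.coeff_self]
  simp [coeff_one]
  ring

lemma legendreIntegral_one_sub_sq_mul_derivative_mul {m : ℕ} (hP : IsMonicLegendre (m + 1) P)
    {g : ℝ[X]} (hg : g.natDegree ≤ m) :
    legendreIntegral ((1 - X ^ 2) * derivative P * g) =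
      (m + 2) * g.coeff m * legendreIntegral (P * P) := by
  set q := derivative ((1 - X ^ 2) * g) with hq
  have hX : (1 - X ^ 2 : ℝ[X]).natDegree ≤ 2 := by compute_degree
  have hqdeg : q.natDegree ≤ m + 1 :=
    (natDegree_derivative_le _).trans (Nat.sub_le_sub_right (natDegree_mul_le_of_le hX hg) 1)
      |>.trans (by lia)
  have hqlead : q.coeff (m + 1) = -((m + 2) * g.coeff m) := by
    rw [hq, coeff_derivative, show m + 1 + 1 = 2 + m by ring,
      coeff_mul_add_eq_of_natDegree_le hX hg]
    simp [coeff_one]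
    ring
  have hparts := legendreIntegral_derivative (P * ((1 - X ^ 2) * g))
  rw [derivative_mul, map_add, ← hq, hP.legendreIntegral_mul hqdeg, hqlead] at hparts
  simp only [eval_mul, eval_sub, eval_one, eval_pow, eval_X, one_pow, neg_one_sq, sub_self,
    zero_mul, mul_zero] at hparts
  rw [show (1 - X ^ 2) * derivative P * g = derivative P * ((1 - X ^ 2) * g) by ring]
  linarith

end IsMonicLegendre

end Legendre

section GaussRule

/-- The `n`-point rule with nodes `x` and weights `w` is the Gauss–Legendre rule: it integrates
polynomials of degree at most `2 n - 1` exactly over `[-1, 1]`. The truncated subtraction does no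
harm, since no rule with `n = 0` points integrates the constant `1`. -/
def IsGaussRule {n : ℕ} (x w : Fin n → ℝ) : Prop :=
  ∀ p : ℝ[X], p.natDegree ≤ 2 * n - 1 →
    ∑ k, w k * p.eval (x k) = ∫ t in (-1 : ℝ)..1, p.eval t

namespace IsGaussRule

variable {n : ℕ} {x w : Fin n → ℝ}

lemma sum_weights (h : IsGaussRule x w) : ∑ k, w k = 2 := by
  simpa [show (1 : ℝ) + 1 = 2 by norm_num] using h 1 (by simp)

lemma pos (h : IsGaussRule x w) : 0 < n := by
  rcases Nat.eq_zero_or_pos n with rfl | hn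
  · simpa using h.sum_weights
  · exact hn

theorem isMonicLegendre_nodal (h : IsGaussRule x w) :
    IsMonicLegendre n (Lagrange.nodal univ x) where
  monic := Lagrange.nodal_monic
  natDegree_eq := by rw [Lagrange.natDegree_nodal, card_univ, Fintype.card_fin]
  orthogonal q hq := by
    have hn := h.pos
    have hdeg : (Lagrange.nodal univ x * q).natDegree ≤ 2 * n - 1 := by
      have hqn : q.natDegree < n := by
        rcases eq_or_ne q 0 with rfl | hq0
        · simpa using hn
        · exact (natDegree_lt_iff_degree_lt hq0).mpr hq
      refine natDegree_mul_le.trans ?_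
      rw [Lagrange.natDegree_nodal, card_univ, Fintype.card_fin]
      lia
    rw [legendreIntegral_apply, ← h _ hdeg]
    exact sum_eq_zero fun k _ => by
      rw [eval_mul, Lagrange.eval_nodal_at_node (mem_univ k), zero_mul, mul_zero]

lemma sum_eval_of_natDegree_le (h : IsGaussRule x w) {p : ℝ[X]} (hp : p.natDegree ≤ 2 * n) :
    ∑ k, w k * p.eval (x k) = legendreIntegral p - p.coeff (2 * n) *
      legendreIntegral (Lagrange.nodal univ x * Lagrange.nodal univ x) := by
  have hP := h.isMonicLegendre_nodal
  set P := Lagrange.nodal univ x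
  have hdeg : (p - C (p.coeff (2 * n)) * (P * P)).natDegree ≤ 2 * n - 1 := by
    have hPP : (P * P).natDegree = 2 * n := by
      rw [hP.monic.natDegree_mul hP.monic, hP.natDegree_eq, two_mul]
    have hlead : (P * P).coeff (2 * n) = 1 := by
      simpa [hPP] using (hP.monic.mul hP.monic).coeff_natDegree
    refine natDegree_le_iff_coeff_eq_zero.mpr fun k hk => ?_
    rcases (show 2 * n ≤ k by lia).eq_or_lt with rfl | hlt
    · simp [hlead]
    · simp [coeff_eq_zero_of_natDegree_lt (hp.trans_lt hlt),
        coeff_eq_zero_of_natDegree_lt (hPP.trans_lt hlt)]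
  have hvanish : ∀ k, P.eval (x k) = 0 := fun k => Lagrange.eval_nodal_at_node (mem_univ k)
  rw [← legendreIntegral_C_mul, ← map_sub, legendreIntegral_apply, ← h _ hdeg]
  exact sum_congr rfl fun k _ => by simp [hvanish]

lemma sum_mul_eval_nodal_erase (x w : Fin n → ℝ) (k : Fin n) (q : ℝ[X]) :
    ∑ j, w j * (q * Lagrange.nodal (univ.erase k) x).eval (x j) =
      w k * (q.eval (x k) * (Lagrange.nodal (univ.erase k) x).eval (x k)) := by
  rw [sum_eq_single k]
  · rw [eval_mul]
  · intro j _ hj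
    rw [eval_mul, Lagrange.eval_nodal_at_node (mem_erase.mpr ⟨hj, mem_univ j⟩), mul_zero, mul_zero]
  · exact fun hk => absurd (mem_univ k) hk

lemma natDegree_nodal_erase (x : Fin n → ℝ) (k : Fin n) :
    (Lagrange.nodal (univ.erase k) x).natDegree = n - 1 := by
  rw [Lagrange.natDegree_nodal, card_erase_of_mem (mem_univ k), card_univ, Fintype.card_fin]

theorem weight_pos (h : IsGaussRule x w) (k : Fin n) : 0 < w k := by
  set g := Lagrange.nodal (univ.erase k) x
  have hdeg : (g * g).natDegree ≤ 2 * n - 1 := by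
    refine natDegree_mul_le.trans ?_
    rw [natDegree_nodal_erase]
    lia
  have hsum : w k * (g.eval (x k) * g.eval (x k)) = legendreIntegral (g * g) := by
    rw [legendreIntegral_apply, ← h _ hdeg, sum_mul_eval_nodal_erase]
  have hpos := legendreIntegral_mul_self_pos (Lagrange.nodal_monic.ne_zero : g ≠ 0)
  exact pos_of_mul_pos_left (hsum ▸ hpos) (mul_self_nonneg _)

/-- The common value of `w k * (1 - x k ^ 2) * P'(x k) ^ 2`, for `P` the nodal polynomial. -/
noncomputable def christoffelConst (x : Fin n → ℝ) : ℝ :=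
  (2 * n + 1) * legendreIntegral (Lagrange.nodal univ x * Lagrange.nodal univ x)

lemma christoffelConst_pos (x : Fin n → ℝ) : 0 < christoffelConst x :=
  mul_pos (by positivity) (legendreIntegral_mul_self_pos Lagrange.nodal_monic.ne_zero)

theorem weight_mul_sq_derivative (h : IsGaussRule x w) (k : Fin n) :
    w k * (1 - x k ^ 2) * (derivative (Lagrange.nodal univ x)).eval (x k) ^ 2 =
      christoffelConst x := by
  obtain ⟨m, rfl⟩ : ∃ m, n = m + 1 := Nat.exists_eq_add_one.mpr h.pos
  have hP := h.isMonicLegendre_nodal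
  have hgk := Lagrange.eval_nodal_derivative_eval_node_eq (v := x) (mem_univ k)
  have hgdeg := natDegree_nodal_erase x k
  have hsum := sum_mul_eval_nodal_erase x w k
    ((1 - X ^ 2) * derivative (Lagrange.nodal univ x))
  set g := Lagrange.nodal (univ.erase k) x
  have hglead : g.coeff m = 1 := by
    rw [← Nat.add_sub_cancel m 1, ← hgdeg]
    exact (Lagrange.nodal_monic : g.Monic).coeff_natDegree
  rw [h.sum_eval_of_natDegree_le (hP.natDegree_one_sub_sq_mul_derivative_mul_le hgdeg.le),
    hP.coeff_one_sub_sq_mul_derivative_mul hgdeg.le,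
    hP.legendreIntegral_one_sub_sq_mul_derivative_mul hgdeg.le, hglead, ← hgk] at hsum
  simp only [eval_mul, eval_sub, eval_one, eval_pow, eval_X] at hsum
  rw [christoffelConst]
  push_cast
  linarith

lemma abs_node_lt_one (h : IsGaussRule x w) (k : Fin n) : |x k| < 1 := by
  have hpos : 0 < w k * (derivative (Lagrange.nodal univ x)).eval (x k) ^ 2 * (1 - x k ^ 2) := by
    rw [mul_right_comm, h.weight_mul_sq_derivative]
    exact christoffelConst_pos x
  exact (sq_lt_one_iff_abs_lt_one _).mp (sub_pos.mp (pos_of_mul_pos_right hpos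
    (mul_nonneg (h.weight_pos k).le (sq_nonneg _))))

lemma injective_nodes (h : IsGaussRule x w) : Function.Injective x := by
  intro j k hjk
  by_contra hne
  have hg := Lagrange.eval_nodal_at_node (v := x) (mem_erase.mpr ⟨hne, mem_univ j⟩)
  rw [hjk, ← Lagrange.eval_nodal_derivative_eval_node_eq (mem_univ k)] at hg
  have hzero := h.weight_mul_sq_derivative k
  rw [hg, zero_pow two_ne_zero, mul_zero] at hzero
  exact (christoffelConst_pos x).ne hzero

lemma comp_equiv (h : IsGaussRule x w) (σ : Equiv.Perm (Fin n)) :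
    IsGaussRule (x ∘ σ) (w ∘ σ) := fun p hp =>
  (Equiv.sum_comp σ fun k => w k * p.eval (x k)).trans (h p hp)

end IsGaussRule

end GaussRule

section Oscillation

/-- `y` solves the oscillator equation `y'' = -Q y` on `s`, with derivative `y'`. -/
structure IsOscillation (y y' Q : ℝ → ℝ) (s : Set ℝ) : Prop where
  hasDerivAt : ∀ t ∈ s, HasDerivAt y (y' t) t
  hasDerivAt_deriv : ∀ t ∈ s, HasDerivAt y' (-(Q t * y t)) t

namespace IsOscillation

variable {y y' Q : ℝ → ℝ} {s : Set ℝ}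

lemma mono (h : IsOscillation y y' Q s) {t : Set ℝ} (ht : t ⊆ s) : IsOscillation y y' Q t :=
  ⟨fun u hu => h.hasDerivAt u (ht hu), fun u hu => h.hasDerivAt_deriv u (ht hu)⟩

lemma neg (h : IsOscillation y y' Q s) : IsOscillation (-y) (-y') Q s :=
  ⟨fun t ht => (h.hasDerivAt t ht).neg, fun t ht =>
    (h.hasDerivAt_deriv t ht).neg.congr_deriv (by rw [Pi.neg_apply, mul_neg])⟩

lemma hasDerivAt_wronskian_sin (h : IsOscillation y y' Q s) (ω a : ℝ) {t : ℝ} (ht : t ∈ s) :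
    HasDerivAt (fun t => y' t * Real.sin (ω * (t - a)) - ω * (y t * Real.cos (ω * (t - a))))
      ((ω ^ 2 - Q t) * (y t * Real.sin (ω * (t - a)))) t := by
  have hlin : HasDerivAt (fun t => ω * (t - a)) ω t := by
    simpa using ((hasDerivAt_id t).sub_const a).const_mul ω
  refine (((h.hasDerivAt_deriv t ht).mul hlin.sin).sub
    (((h.hasDerivAt t ht).mul hlin.cos).const_mul ω)).congr_deriv ?_
  ring

-- Sturm comparison with `sin (ω (t - a))`: the Wronskian `W` is antitone where both are positive,
-- whereas `W a < 0 < W (a + π / ω)`.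
lemma not_forall_pos {a ω : ℝ} (h : IsOscillation y y' Q (Set.Icc a (a + π / ω))) (hω : 0 < ω)
    (hQ : ∀ t ∈ Set.Icc a (a + π / ω), ω ^ 2 ≤ Q t) :
    ¬ ∀ t ∈ Set.Icc a (a + π / ω), 0 < y t := by
  intro hpos
  have hπ : 0 < π / ω := div_pos Real.pi_pos hω
  have hωπ : ω * (π / ω) = π := mul_div_cancel₀ _ hω.ne'
  have hanti := antitoneOn_of_hasDerivWithinAt_nonpos (convex_Icc a (a + π / ω))
    (fun t ht => (h.hasDerivAt_wronskian_sin ω a ht).continuousAt.continuousWithinAt)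
    (fun t ht => (h.hasDerivAt_wronskian_sin ω a (interior_subset ht)).hasDerivWithinAt)
    (fun t ht => by
      have ht := interior_subset ht
      have hsin : 0 ≤ Real.sin (ω * (t - a)) :=
        Real.sin_nonneg_of_nonneg_of_le_pi (mul_nonneg hω.le (sub_nonneg.mpr ht.1))
          (by rw [← hωπ]; exact mul_le_mul_of_nonneg_left (by linarith [ht.2]) hω.le)
      exact mul_nonpos_of_nonpos_of_nonneg (sub_nonpos.mpr (hQ t ht))
        (mul_nonneg (hpos t ht).le hsin))
  have hle : a ≤ a + π / ω := le_add_of_nonneg_right hπ.le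
  have hW := hanti (Set.left_mem_Icc.mpr hle) (Set.right_mem_Icc.mpr hle) hle
  simp only [add_sub_cancel_left, sub_self, mul_zero, hωπ, Real.sin_zero, Real.sin_pi,
    Real.cos_zero, Real.cos_pi] at hW
  nlinarith [hpos a (Set.left_mem_Icc.mpr hle), hpos _ (Set.right_mem_Icc.mpr hle)]

theorem sub_le_pi_div {a b ω : ℝ} (h : IsOscillation y y' Q (Set.Ioo a b)) (hω : 0 < ω)
    (hQ : ∀ t ∈ Set.Ioo a b, ω ^ 2 ≤ Q t) (hne : ∀ t ∈ Set.Ioo a b, y t ≠ 0) :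
    b - a ≤ π / ω := by
  by_contra! hlt
  obtain ⟨a', haa', ha'b⟩ := exists_between (show a < b - π / ω by linarith)
  have hsub : Set.Icc a' (a' + π / ω) ⊆ Set.Ioo a b := fun t ht =>
    ⟨haa'.trans_le ht.1, ht.2.trans_lt (by linarith)⟩
  have hcont : ContinuousOn y (Set.Icc a' (a' + π / ω)) := fun t ht =>
    (h.hasDerivAt t (hsub ht)).continuousAt.continuousWithinAt
  rcases isPreconnected_Icc.mapsTo_Ioi_or_Iio hcont (fun t ht => hne t (hsub ht)) with hpos | hneg
  · exact (h.mono hsub).not_forall_pos hω (fun t ht => hQ t (hsub ht)) hpos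
  · exact (h.mono hsub).neg.not_forall_pos hω (fun t ht => hQ t (hsub ht))
      fun t ht => neg_pos.mpr (hneg ht)

end IsOscillation

/-- Liouville's substitution `y(t) = √(sin t) P(cos t)`, which removes the first-order term of the
Legendre equation. -/
noncomputable def liouville (P : ℝ[X]) (t : ℝ) : ℝ := √(Real.sin t) * P.eval (Real.cos t)

/-- The derivative of `liouville P`. -/
noncomputable def liouvilleDeriv (P : ℝ[X]) (t : ℝ) : ℝ :=
  Real.cos t / (2 * √(Real.sin t)) * P.eval (Real.cos t)
    - √(Real.sin t) * Real.sin t * (derivative P).eval (Real.cos t)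

lemma hasDerivAt_liouville (P : ℝ[X]) {t : ℝ} (ht : 0 < Real.sin t) :
    HasDerivAt (liouville P) (liouvilleDeriv P t) t := by
  refine (((Real.hasDerivAt_sin t).sqrt ht.ne').mul
    ((P.hasDerivAt (Real.cos t)).comp t (Real.hasDerivAt_cos t))).congr_deriv ?_
  simp only [liouvilleDeriv, Function.comp_apply]
  ring

lemma hasDerivAt_liouvilleDeriv (P : ℝ[X]) {t : ℝ} (ht : 0 < Real.sin t) :
    HasDerivAt (liouvilleDeriv P) (√(Real.sin t) * (legendreOp P).eval (Real.cos t) -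
      (1 / 4 + 1 / (4 * Real.sin t ^ 2)) * liouville P t) t := by
  have hsqrt : 0 < √(Real.sin t) := Real.sqrt_pos.mpr ht
  have hdsqrt := (Real.hasDerivAt_sin t).sqrt ht.ne'
  have hdcos := Real.hasDerivAt_cos t
  refine (((hdcos.div (hdsqrt.const_mul 2) (by positivity)).mul
    ((P.hasDerivAt _).comp t hdcos)).sub ((hdsqrt.mul (Real.hasDerivAt_sin t)).mul
      (((derivative P).hasDerivAt _).comp t hdcos))).congr_deriv ?_
  simp only [Function.comp_apply, Pi.mul_apply, Pi.div_apply, liouville, legendreOp_eq, eval_sub,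
    eval_mul, eval_one, eval_pow, eval_X, eval_ofNat]
  have hcos : Real.cos t ^ 2 = 1 - √(Real.sin t) ^ 4 := by
    rw [Real.cos_sq', show 4 = 2 * 2 by rfl, pow_mul, Real.sq_sqrt ht.le]
  have hsin : Real.sin t = √(Real.sin t) ^ 2 := (Real.sq_sqrt ht.le).symm
  set q := √(Real.sin t)
  rw [hsin]
  field_simp
  rw [hcos]
  ring

/-- The potential in the normal form of the Legendre equation. -/
noncomputable def legendrePotential (n : ℕ) (t : ℝ) : ℝ :=
  ((n : ℝ) + 1 / 2) ^ 2 + 1 / (4 * Real.sin t ^ 2)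

theorem IsMonicLegendre.isOscillation {n : ℕ} {P : ℝ[X]} (hP : IsMonicLegendre n P) :
    IsOscillation (liouville P) (liouvilleDeriv P) (legendrePotential n) (Set.Ioo 0 π) where
  hasDerivAt _ ht := hasDerivAt_liouville P (Real.sin_pos_of_mem_Ioo ht)
  hasDerivAt_deriv t ht := by
    refine (hasDerivAt_liouvilleDeriv P (Real.sin_pos_of_mem_Ioo ht)).congr_deriv ?_
    rw [hP.legendreOp_eq_neg_mul, eval_neg, eval_mul, eval_C, liouville, legendrePotential]
    ring

end Oscillation

section Spacing

/-- The asymptotic spacing of the angles of the zeros of the Legendre polynomial of degree `n`. -/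
noncomputable def mesh (n : ℕ) : ℝ := π / (n + 1 / 2)

lemma mesh_pos (n : ℕ) : 0 < mesh n := div_pos Real.pi_pos (by positivity)

/-- The angle `θ` with `cos θ = x k` of the `k`-th node. -/
noncomputable def nodeAngle {n : ℕ} (x : Fin n → ℝ) (k : Fin n) : ℝ := Real.arccos (x k)

namespace IsGaussRule

variable {n : ℕ} {x w : Fin n → ℝ}

lemma cos_nodeAngle (h : IsGaussRule x w) (k : Fin n) : Real.cos (nodeAngle x k) = x k :=
  Real.cos_arccos (abs_lt.mp (h.abs_node_lt_one k)).1.le (abs_lt.mp (h.abs_node_lt_one k)).2.le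

lemma nodeAngle_mem_Ioo (h : IsGaussRule x w) (k : Fin n) : nodeAngle x k ∈ Set.Ioo 0 π := by
  have hk := abs_lt.mp (h.abs_node_lt_one k)
  exact ⟨Real.arccos_pos.mpr hk.2, Real.arccos_lt_pi.mpr hk.1⟩

lemma strictMono_nodeAngle (h : IsGaussRule x w) (hx : StrictAnti x) :
    StrictMono (nodeAngle x) := fun j k hjk =>
  Real.strictAntiOn_arccos (abs_le.mp (h.abs_node_lt_one k).le)
    (abs_le.mp (h.abs_node_lt_one j).le) (hx hjk)

lemma sub_le_of_forall_nodeAngle_notMem (h : IsGaussRule x w) {a b : ℝ} (ha : 0 ≤ a) (hb : b ≤ π)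
    (hab : ∀ k, nodeAngle x k ∉ Set.Ioo a b) : b - a ≤ mesh n := by
  have hsub : Set.Ioo a b ⊆ Set.Ioo 0 π := Set.Ioo_subset_Ioo ha hb
  refine (h.isMonicLegendre_nodal.isOscillation.mono hsub).sub_le_pi_div (by positivity)
    (fun t _ => le_add_of_nonneg_right (by positivity)) fun t ht hzero => ?_
  have hsin := Real.sin_pos_of_mem_Ioo (hsub ht)
  rw [liouville, mul_eq_zero_iff_left (Real.sqrt_pos.mpr hsin).ne', Lagrange.eval_nodal,
    prod_eq_zero_iff] at hzero
  obtain ⟨k, -, hk⟩ := hzero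
  refine hab k ?_
  rwa [nodeAngle, ← sub_eq_zero.mp hk, Real.arccos_cos (hsub ht).1.le (hsub ht).2.le]

lemma exists_perm_strictAnti (h : IsGaussRule x w) :
    ∃ σ : Equiv.Perm (Fin n), StrictAnti (x ∘ σ) := by
  refine ⟨Tuple.sort (-x), fun j k hjk => ?_⟩
  have hmono := (Tuple.monotone_sort (-x)).strictMono_of_injective
    ((neg_injective.comp h.injective_nodes).comp (Equiv.injective _))
  exact neg_lt_neg_iff.mp (hmono hjk)

end IsGaussRule

/-- The angles `θ 0, …, θ N` come at most `h = π / (N + 3 / 2)` after one another, starting from `0`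
and ending in `π`. -/
structure IsQuasiUniform {N : ℕ} (θ : Fin (N + 1) → ℝ) (h : ℝ) : Prop where
  mul_eq : (N + 3 / 2) * h = π
  first_le : θ 0 ≤ h
  gap_le : ∀ k : Fin N, θ k.succ - θ k.castSucc ≤ h
  le_last : π - θ (Fin.last N) ≤ h

theorem IsGaussRule.isQuasiUniform {N : ℕ} {x w : Fin (N + 1) → ℝ} (h : IsGaussRule x w)
    (hx : StrictAnti x) : IsQuasiUniform (nodeAngle x) (mesh (N + 1)) := by
  have hmono := h.strictMono_nodeAngle hx
  have hgap : ∀ {a b : ℝ}, 0 ≤ a → b ≤ π → (∀ k, nodeAngle x k ∉ Set.Ioo a b) →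
      b - a ≤ mesh (N + 1) := h.sub_le_of_forall_nodeAngle_notMem
  refine ⟨?_, ?_, fun k => ?_, ?_⟩
  · rw [mesh, show (N + 3 / 2 : ℝ) = (N + 1 : ℕ) + 1 / 2 by push_cast; ring]
    exact mul_div_cancel₀ _ (by positivity)
  · refine (sub_zero (nodeAngle x 0)).ge.trans (hgap le_rfl (h.nodeAngle_mem_Ioo 0).2.le ?_)
    exact fun k hk => hk.2.not_ge (hmono.monotone (Fin.zero_le k))
  · refine hgap (h.nodeAngle_mem_Ioo _).1.le (h.nodeAngle_mem_Ioo _).2.le fun j hj => ?_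
    exact (Fin.castSucc_lt_iff_succ_le.mp (hmono.lt_iff_lt.mp hj.1)).not_gt
      (hmono.lt_iff_lt.mp hj.2)
  · refine hgap (h.nodeAngle_mem_Ioo _).1.le le_rfl fun k hk => ?_
    exact hk.1.not_ge (hmono.monotone (Fin.le_last k))

namespace IsQuasiUniform

variable {N : ℕ} {θ : Fin (N + 1) → ℝ} {h : ℝ}

lemma le_mul (hθ : IsQuasiUniform θ h) (k : Fin (N + 1)) : θ k ≤ (k + 1) * h := by
  induction k using Fin.induction with
  | zero => simpa using hθ.first_le
  | succ k ih =>
    have := hθ.gap_le k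
    simp only [Fin.val_castSucc] at ih
    push_cast [Fin.val_succ]
    linarith

lemma mul_le (hθ : IsQuasiUniform θ h) (k : Fin (N + 1)) : (k + 1 / 2) * h ≤ θ k := by
  have hπ := hθ.mul_eq
  induction k using Fin.reverseInduction with
  | last =>
    have := hθ.le_last
    push_cast [Fin.val_last]
    linarith
  | cast k ih =>
    have := hθ.gap_le k
    push_cast [Fin.val_succ] at ih
    simp only [Fin.val_castSucc]
    linarith

lemma sum_gap_defect_le (hθ : IsQuasiUniform θ h) :
    ∑ k : Fin N, (h - (θ k.succ - θ k.castSucc)) ≤ h / 2 := by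
  rw [sum_sub_distrib, sum_const, card_univ, Fintype.card_fin, nsmul_eq_mul,
    sum_sub_distrib]
  have htel := (Fin.sum_univ_succ θ).symm.trans (Fin.sum_univ_castSucc θ)
  linarith [hθ.first_le, hθ.le_last, hθ.mul_eq]

lemma pos (hθ : IsQuasiUniform θ h) : 0 < h :=
  pos_of_mul_pos_right (hθ.mul_eq ▸ Real.pi_pos) (by positivity)

lemma mem_Icc (hθ : IsQuasiUniform θ h) (k : Fin (N + 1)) :
    θ k ∈ Set.Icc (h / 2) (π - h / 2) := by
  have hh := hθ.pos
  have hkN : (k : ℝ) ≤ N := Nat.cast_le.mpr (Nat.lt_succ_iff.mp k.2)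
  have hπ := hθ.mul_eq
  have hlower := hθ.mul_le k
  have hupper := hθ.le_mul k
  constructor
  · nlinarith [k.val.cast_nonneg (α := ℝ)]
  · nlinarith

end IsQuasiUniform

end Spacing

section Amplitude

-- `‖Z‖² e^{∓2G}` is antitone, respectively monotone.
theorem norm_sq_le_exp_mul_norm_sq {E : Type*} [NormedAddCommGroup E] [InnerProductSpace ℝ E]
    {Z Z' : ℝ → E} {G g : ℝ → ℝ} {s : Set ℝ} (hs : Convex ℝ s)
    (hZ : ∀ t ∈ s, HasDerivAt Z (Z' t) t) (hG : ∀ t ∈ s, HasDerivAt G (g t) t)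
    (hle : ∀ t ∈ s, ‖Z' t‖ ≤ g t * ‖Z t‖) {a b : ℝ} (ha : a ∈ s) (hb : b ∈ s) :
    ‖Z a‖ ^ 2 ≤ Real.exp (2 * |G a - G b|) * ‖Z b‖ ^ 2 := by
  have hderiv : ∀ c : ℝ, ∀ t ∈ s, HasDerivAt (fun u => ‖Z u‖ ^ 2 * Real.exp (2 * (c * G u)))
      (2 * (inner ℝ (Z t) (Z' t) + c * g t * ‖Z t‖ ^ 2) * Real.exp (2 * (c * G t))) t :=
    fun c t ht => ((hZ t ht).norm_sq.mul (((hG t ht).const_mul c).const_mul 2).exp).congr_deriv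
      (by ring)
  have hinner : ∀ t ∈ s, |inner ℝ (Z t) (Z' t)| ≤ g t * ‖Z t‖ ^ 2 := fun t ht =>
    (abs_real_inner_le_norm _ _).trans
      (by nlinarith [mul_le_mul_of_nonneg_left (hle t ht) (norm_nonneg (Z t))])
  have hanti := antitoneOn_of_hasDerivWithinAt_nonpos hs
    (fun t ht => (hderiv (-1) t ht).continuousAt.continuousWithinAt)
    (fun t ht => (hderiv (-1) t (interior_subset ht)).hasDerivWithinAt)
    (fun t ht => mul_nonpos_of_nonpos_of_nonneg
      (by linarith [(abs_le.mp (hinner t (interior_subset ht))).2]) (Real.exp_nonneg _))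
  have hmono := monotoneOn_of_hasDerivWithinAt_nonneg hs
    (fun t ht => (hderiv 1 t ht).continuousAt.continuousWithinAt)
    (fun t ht => (hderiv 1 t (interior_subset ht)).hasDerivWithinAt)
    (fun t ht => mul_nonneg
      (by linarith [(abs_le.mp (hinner t (interior_subset ht))).1]) (Real.exp_nonneg _))
  have hcancel : ∀ c : ℝ, ‖Z a‖ ^ 2 * Real.exp (2 * (c * G a)) ≤
      ‖Z b‖ ^ 2 * Real.exp (2 * (c * G b)) → |c| = 1 →
      ‖Z a‖ ^ 2 ≤ Real.exp (2 * |G a - G b|) * ‖Z b‖ ^ 2 := by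
    intro c hc hcabs
    rw [← le_div_iff₀ (Real.exp_pos _), mul_div_assoc, ← Real.exp_sub, mul_comm] at hc
    refine hc.trans (mul_le_mul_of_nonneg_right (Real.exp_le_exp.mpr ?_) (sq_nonneg _))
    have habs := le_abs_self (c * (G b - G a))
    rw [abs_mul, hcabs, one_mul, abs_sub_comm] at habs
    linarith
  rcases le_total a b with hab | hba
  · exact hcancel 1 (hmono ha hb hab) abs_one
  · exact hcancel (-1) (hanti hb ha hba) (by rw [abs_neg, abs_one])

/-- The slowly varying amplitude `Z = (y' + i L y) e^{-i L t}` of a solution of `y'' = -Q y` with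
`Q` close to `L²`; it is constant when `Q = L²`. -/
noncomputable def amplitude (y y' : ℝ → ℝ) (L t : ℝ) : ℂ :=
  (y' t + Complex.I * (L * y t)) * Complex.exp (-(Complex.I * (L * t)))

lemma norm_exp_neg_I_mul (L t : ℝ) : ‖Complex.exp (-(Complex.I * (L * t)))‖ = 1 := by
  rw [Complex.norm_exp]
  simp

lemma norm_amplitude_sq (y y' : ℝ → ℝ) (L t : ℝ) :
    ‖amplitude y y' L t‖ ^ 2 = y' t ^ 2 + (L * y t) ^ 2 := by
  rw [amplitude, norm_mul, norm_exp_neg_I_mul, mul_one, Complex.sq_norm, Complex.normSq_apply]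
  simp [← sq]

lemma abs_mul_le_norm_amplitude (y y' : ℝ → ℝ) (L t : ℝ) :
    |L * y t| ≤ ‖amplitude y y' L t‖ :=
  abs_le_of_sq_le_sq (norm_amplitude_sq y y' L t ▸ le_add_of_nonneg_left (sq_nonneg _))
    (norm_nonneg _)

lemma IsOscillation.hasDerivAt_amplitude {y y' Q : ℝ → ℝ} {s : Set ℝ} (h : IsOscillation y y' Q s)
    (L : ℝ) {t : ℝ} (ht : t ∈ s) : HasDerivAt (amplitude y y' L)
      (((L ^ 2 - Q t) * y t : ℝ) * Complex.exp (-(Complex.I * (L * t)))) t := by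
  have hphase : HasDerivAt (fun u : ℝ => -(Complex.I * (L * u))) (-(Complex.I * L)) t := by
    simpa using (((hasDerivAt_id t).ofReal_comp.const_mul (L : ℂ)).const_mul Complex.I).fun_neg
  refine (((h.hasDerivAt_deriv t ht).ofReal_comp.fun_add
    (((h.hasDerivAt t ht).ofReal_comp.const_mul (L : ℂ)).const_mul Complex.I)).mul
      hphase.cexp).congr_deriv ?_
  push_cast
  linear_combination (-(L : ℂ) ^ 2 * y t * Complex.exp (-(Complex.I * (L * t)))) * Complex.I_sq

lemma exists_hasDerivAt_conj_pow_div_pow {Z : ℝ → ℂ} {Z' : ℂ} {t : ℝ} (hZ : HasDerivAt Z Z' t)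
    (hne : Z t ≠ 0) (q : ℕ) : ∃ D, HasDerivAt (fun u => conj (Z u) ^ q / Z u ^ (q + 2)) D t ∧
      ‖D‖ ≤ 2 * (q + 1) * ‖Z'‖ / ‖Z t‖ ^ 3 := by
  have hconj : HasDerivAt (fun u => conj (Z u)) (conj Z') t := hZ.star
  have : 0 < ‖Z t‖ := norm_pos_iff.mpr hne
  refine ⟨_, (hconj.fun_pow q).div (hZ.fun_pow (q + 2)) (pow_ne_zero _ hne), ?_⟩
  rw [norm_div, norm_pow, norm_pow, div_le_div_iff₀ (by positivity) (by positivity)]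
  have hnum : ‖(q : ℂ) * conj (Z t) ^ (q - 1) * conj Z' * Z t ^ (q + 2) -
      conj (Z t) ^ q * (((q + 2 : ℕ) : ℂ) * Z t ^ (q + 2 - 1) * Z')‖ ≤
        2 * (q + 1) * ‖Z'‖ * ‖Z t‖ ^ (2 * q + 1) := by
    refine (norm_sub_le _ _).trans_eq ?_
    simp only [norm_mul, norm_pow, RCLike.norm_conj, Complex.norm_natCast]
    rcases q with _ | q
    · simp [mul_right_comm]
    · simp only [Nat.add_sub_cancel]
      push_cast
      ring
  exact (mul_le_mul_of_nonneg_right hnum (by positivity)).trans_eq (by ring)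

lemma two_div_pi_mul_min_le_sin {t : ℝ} (ht : t ∈ Set.Icc 0 π) :
    2 / π * min t (π - t) ≤ Real.sin t := by
  rcases le_total t (π / 2) with h | h
  · rw [min_eq_left (by linarith)]
    exact Real.mul_le_sin ht.1 h
  · rw [min_eq_right (by linarith), ← Real.sin_pi_sub]
    exact Real.mul_le_sin (sub_nonneg.mpr ht.2) (by linarith)

lemma two_div_pi_sq_mul_le_sin {t : ℝ} (ht : t ∈ Set.Icc 0 π) :
    2 / π ^ 2 * (t * (π - t)) ≤ Real.sin t := by
  refine le_trans ?_ (two_div_pi_mul_min_le_sin ht)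
  have hmin : t * (π - t) ≤ π * min t (π - t) := by
    rw [← max_mul_min t]
    exact mul_le_mul_of_nonneg_right (max_le ht.2 (sub_le_self π ht.1))
      (le_min ht.1 (sub_nonneg.mpr ht.2))
  calc 2 / π ^ 2 * (t * (π - t)) ≤ 2 / π ^ 2 * (π * min t (π - t)) := by gcongr
    _ = 2 / π * min t (π - t) := by field_simp

/-- The angles at distance at least half a mesh from `0` and `π`, where `(n + 1 / 2) sin t ≥ 1`. -/
def bulk (n : ℕ) : Set ℝ := Set.Icc (mesh n / 2) (π - mesh n / 2)

lemma bulk_subset_Ioo (n : ℕ) : bulk n ⊆ Set.Ioo 0 π := fun t ht => by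
  have hpos := mesh_pos n
  exact ⟨by linarith [ht.1], by linarith [ht.2]⟩

lemma one_le_mul_sin {n : ℕ} {t : ℝ} (ht : t ∈ bulk n) : 1 ≤ ((n : ℝ) + 1 / 2) * Real.sin t := by
  have hmin : mesh n / 2 ≤ min t (π - t) := le_min ht.1 (le_sub_comm.mp ht.2)
  calc 1 = ((n : ℝ) + 1 / 2) * (2 / π * (mesh n / 2)) := by rw [mesh]; field_simp
    _ ≤ ((n : ℝ) + 1 / 2) * (2 / π * min t (π - t)) := by gcongr
    _ ≤ ((n : ℝ) + 1 / 2) * Real.sin t := by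
      gcongr
      exact two_div_pi_mul_min_le_sin (Set.Ioo_subset_Icc_self (bulk_subset_Ioo n ht))

/-- The amplitude of the Liouville transform of `P`, at the Legendre frequency `n + 1 / 2`. -/
noncomputable def legendreAmplitude (n : ℕ) (P : ℝ[X]) : ℝ → ℂ :=
  amplitude (liouville P) (liouvilleDeriv P) (n + 1 / 2)

namespace IsMonicLegendre

variable {n : ℕ} {P : ℝ[X]}

lemma hasDerivAt_legendreAmplitude (hP : IsMonicLegendre n P) {t : ℝ} (ht : t ∈ Set.Ioo 0 π) :
    HasDerivAt (legendreAmplitude n P) (deriv (legendreAmplitude n P) t) t :=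
  (hP.isOscillation.hasDerivAt_amplitude _ ht).differentiableAt.hasDerivAt

lemma norm_deriv_legendreAmplitude_le (hP : IsMonicLegendre n P) {t : ℝ}
    (ht : t ∈ Set.Ioo 0 π) : ‖deriv (legendreAmplitude n P) t‖ ≤
      1 / (4 * ((n : ℝ) + 1 / 2) * Real.sin t ^ 2) * ‖legendreAmplitude n P t‖ := by
  have hsin := Real.sin_pos_of_mem_Ioo ht
  have hL : (0 : ℝ) < n + 1 / 2 := by positivity
  have hy := abs_mul_le_norm_amplitude (liouville P) (liouvilleDeriv P) (n + 1 / 2) t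
  rw [abs_mul, abs_of_pos hL] at hy
  rw [legendreAmplitude, (hP.isOscillation.hasDerivAt_amplitude _ ht).deriv, norm_mul,
    norm_exp_neg_I_mul, mul_one, Complex.norm_real, Real.norm_eq_abs, legendrePotential,
    sub_add_cancel_left, abs_mul, abs_neg, abs_of_pos (by positivity)]
  refine le_trans (le_of_eq ?_) (mul_le_mul_of_nonneg_left hy (by positivity))
  field_simp

lemma sin_mul_norm_deriv_legendreAmplitude_le (hP : IsMonicLegendre n P) {t : ℝ}
    (ht : t ∈ bulk n) :
    Real.sin t * ‖deriv (legendreAmplitude n P) t‖ ≤ ‖legendreAmplitude n P t‖ / 4 := by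
  have hsin := Real.sin_pos_of_mem_Ioo (bulk_subset_Ioo n ht)
  refine (mul_le_mul_of_nonneg_left
    (hP.norm_deriv_legendreAmplitude_le (bulk_subset_Ioo n ht)) hsin.le).trans ?_
  rw [← mul_assoc, div_eq_inv_mul ‖_‖]
  gcongr
  rw [← div_eq_mul_one_div, div_le_iff₀ (by positivity)]
  linarith [mul_le_mul_of_nonneg_right (one_le_mul_sin ht) hsin.le]

lemma hasDerivAt_neg_cos_div_sin {L t : ℝ} (hL : L ≠ 0) (ht : Real.sin t ≠ 0) :
    HasDerivAt (fun u => -Real.cos u / (4 * L * Real.sin u)) (1 / (4 * L * Real.sin t ^ 2)) t := by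
  refine ((Real.hasDerivAt_cos t).fun_neg.fun_div ((Real.hasDerivAt_sin t).const_mul (4 * L))
    (by positivity)).congr_deriv ?_
  field_simp
  linear_combination Real.sin_sq_add_cos_sq t

lemma norm_sq_legendreAmplitude_le (hP : IsMonicLegendre n P) {a b : ℝ}
    (ha : a ∈ bulk n) (hb : b ∈ bulk n) :
    ‖legendreAmplitude n P a‖ ^ 2 ≤ Real.exp 1 * ‖legendreAmplitude n P b‖ ^ 2 := by
  have hL : (0 : ℝ) < n + 1 / 2 := by positivity
  have hsub : bulk n ⊆ Set.Ioo 0 π := bulk_subset_Ioo n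
  refine (norm_sq_le_exp_mul_norm_sq (convex_Icc _ _)
    (fun t ht => hP.hasDerivAt_legendreAmplitude (hsub ht))
    (fun t ht => hasDerivAt_neg_cos_div_sin hL.ne' (Real.sin_pos_of_mem_Ioo (hsub ht)).ne')
    (fun t ht => hP.norm_deriv_legendreAmplitude_le (hsub ht)) ha hb).trans ?_
  have hG : ∀ t ∈ bulk n,
      |-Real.cos t / (4 * (n + 1 / 2 : ℝ) * Real.sin t)| ≤ 1 / 4 := fun t ht => by
    have hsin := one_le_mul_sin ht
    rw [abs_div, abs_neg, mul_assoc, abs_of_pos (a := 4 * _) (by linarith),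
      div_le_div_iff₀ (by linarith) (by norm_num)]
    linarith [Real.abs_cos_le_one t]
  gcongr
  linarith [(abs_sub _ _).trans (add_le_add (hG a ha) (hG b hb))]

end IsMonicLegendre

lemma legendreAmplitude_of_eval_eq_zero {P : ℝ[X]} {t : ℝ} (h : P.eval (Real.cos t) = 0) (n : ℕ) :
    legendreAmplitude n P t =
      liouvilleDeriv P t * Complex.exp (-(Complex.I * ((n + 1 / 2 : ℝ) * t))) := by
  rw [legendreAmplitude, amplitude, liouville, h]
  simp

lemma sq_liouvilleDeriv_of_eval_eq_zero {P : ℝ[X]} {t : ℝ} (h : P.eval (Real.cos t) = 0)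
    (ht : 0 ≤ Real.sin t) :
    liouvilleDeriv P t ^ 2 = Real.sin t ^ 3 * (derivative P).eval (Real.cos t) ^ 2 := by
  rw [liouvilleDeriv, h, mul_zero, zero_sub, neg_sq, mul_pow, mul_pow, Real.sq_sqrt ht]
  ring

namespace IsGaussRule

section Weights

variable {n : ℕ} {x w : Fin n → ℝ}

lemma eval_cos_nodeAngle (h : IsGaussRule x w) (k : Fin n) :
    (Lagrange.nodal univ x).eval (Real.cos (nodeAngle x k)) = 0 := by
  rw [h.cos_nodeAngle]
  exact Lagrange.eval_nodal_at_node (mem_univ k)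

lemma weight_mul_sq_liouvilleDeriv (h : IsGaussRule x w) (k : Fin n) :
    w k * liouvilleDeriv (Lagrange.nodal univ x) (nodeAngle x k) ^ 2 =
      christoffelConst x * Real.sin (nodeAngle x k) := by
  rw [sq_liouvilleDeriv_of_eval_eq_zero (h.eval_cos_nodeAngle k)
    (Real.sin_pos_of_mem_Ioo (h.nodeAngle_mem_Ioo k)).le, pow_succ, Real.sin_sq, h.cos_nodeAngle,
    ← h.weight_mul_sq_derivative k]
  ring

lemma weight_mul_norm_sq_legendreAmplitude (h : IsGaussRule x w) (k : Fin n) :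
    w k * ‖legendreAmplitude n (Lagrange.nodal univ x) (nodeAngle x k)‖ ^ 2 =
      christoffelConst x * Real.sin (nodeAngle x k) := by
  rw [legendreAmplitude_of_eval_eq_zero (h.eval_cos_nodeAngle k), norm_mul, norm_exp_neg_I_mul,
    mul_one, Complex.norm_real, Real.norm_eq_abs, sq_abs, h.weight_mul_sq_liouvilleDeriv]

/-- A slowly varying function which at the angle `θ` of a node of weight `w` takes the value
`w e^{i (q + 1) (2 n + 1) θ}`. -/
noncomputable def weightPhase (x : Fin n → ℝ) (q : ℕ) (t : ℝ) : ℂ :=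
  (christoffelConst x * Real.sin t : ℝ) *
    (conj (legendreAmplitude n (Lagrange.nodal univ x) t) ^ q /
      legendreAmplitude n (Lagrange.nodal univ x) t ^ (q + 2))

theorem weightPhase_nodeAngle (h : IsGaussRule x w) (q : ℕ) (k : Fin n) :
    weightPhase x q (nodeAngle x k) =
      w k * Complex.exp (Complex.I * ((q + 1) * (2 * n + 1) * nodeAngle x k)) := by
  have hw := h.weight_mul_sq_liouvilleDeriv k
  rw [weightPhase, legendreAmplitude_of_eval_eq_zero (h.eval_cos_nodeAngle k)]
  set θ := nodeAngle x k
  set d := liouvilleDeriv (Lagrange.nodal univ x) θ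
  have hd : (d : ℂ) ≠ 0 := by
    have hpos := mul_pos (christoffelConst_pos x)
      (Real.sin_pos_of_mem_Ioo (h.nodeAngle_mem_Ioo k))
    rw [← hw] at hpos
    exact Complex.ofReal_ne_zero.mpr fun hzero => by simp [hzero] at hpos
  have hconj : conj (Complex.exp (Complex.I * ((n + 1 / 2 : ℝ) * θ))) =
      (Complex.exp (Complex.I * ((n + 1 / 2 : ℝ) * θ)))⁻¹ := by
    rw [← Complex.exp_conj, ← Complex.exp_neg, map_mul, map_mul, Complex.conj_I,
      Complex.conj_ofReal, Complex.conj_ofReal, neg_mul]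
  have hphase : Complex.exp (Complex.I * ((q + 1) * (2 * n + 1) * θ)) =
      Complex.exp (Complex.I * ((n + 1 / 2 : ℝ) * θ)) ^ (2 * (q + 1)) := by
    rw [← Complex.exp_nat_mul]
    push_cast
    ring_nf
  rw [hphase, Complex.exp_neg, map_mul, map_inv₀, hconj, Complex.conj_ofReal, inv_inv, ← hw]
  have hE := Complex.exp_ne_zero (Complex.I * ((n + 1 / 2 : ℝ) * θ))
  set E := Complex.exp (Complex.I * ((n + 1 / 2 : ℝ) * θ))
  push_cast
  simp only [mul_pow, inv_pow]
  field_simp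
  ring

lemma norm_weightPhase (x : Fin n → ℝ) (q : ℕ) {t : ℝ} (ht : 0 ≤ Real.sin t) :
    ‖weightPhase x q t‖ = christoffelConst x * Real.sin t /
      ‖legendreAmplitude n (Lagrange.nodal univ x) t‖ ^ 2 := by
  rw [weightPhase, norm_mul, Complex.norm_real, Real.norm_eq_abs,
    abs_of_nonneg (mul_nonneg (christoffelConst_pos x).le ht), norm_div, norm_pow, norm_pow,
    RCLike.norm_conj]
  rcases eq_or_ne ‖legendreAmplitude n (Lagrange.nodal univ x) t‖ 0 with hZ | hZ
  · simp [hZ]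
  · field_simp
    ring

end Weights

end IsGaussRule

lemma sum_range_add_half_mul (c : ℝ) (n : ℕ) :
    ∑ k ∈ range n, ((k : ℝ) + 1 / 2) * (c - (k + 1 / 2)) =
      c * n ^ 2 / 2 - n ^ 3 / 3 + n / 12 := by
  induction n with
  | zero => simp
  | succ n ih =>
    rw [sum_range_succ, ih]
    push_cast
    ring

namespace IsQuasiUniform

variable {N : ℕ} {θ : Fin (N + 1) → ℝ} {h : ℝ}

lemma mul_sub_le_sin (hθ : IsQuasiUniform θ h) (k : Fin (N + 1)) :
    2 / π ^ 2 * h ^ 2 * ((k + 1 / 2) * (N + 1 - (k + 1 / 2))) ≤ Real.sin (θ k) := by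
  have hh := hθ.pos
  have hIcc := hθ.mem_Icc k
  have hkN : (k : ℝ) ≤ N := Nat.cast_le.mpr (Nat.lt_succ_iff.mp k.2)
  have hright : (N + 1 - (k + 1 / 2)) * h ≤ π - θ k := by
    linarith [hθ.le_mul k, hθ.mul_eq]
  calc 2 / π ^ 2 * h ^ 2 * ((k + 1 / 2) * (N + 1 - (k + 1 / 2)))
      = 2 / π ^ 2 * (((k + 1 / 2) * h) * ((N + 1 - (k + 1 / 2)) * h)) := by ring
    _ ≤ 2 / π ^ 2 * (θ k * (π - θ k)) := by
      gcongr
      · exact mul_nonneg (by linarith) hh.le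
      · linarith [hIcc.1]
      · exact hθ.mul_le k
    _ ≤ Real.sin (θ k) :=
      two_div_pi_sq_mul_le_sin ⟨by linarith [hIcc.1], by linarith [hIcc.2]⟩

lemma le_mul_sum_sin (hθ : IsQuasiUniform θ h) : 8 / 27 ≤ h * ∑ k, Real.sin (θ k) := by
  have hh := hθ.pos
  have hlength : 2 * π / 3 ≤ (N + 1) * h := by
    have := hθ.mul_eq
    nlinarith [N.cast_nonneg (α := ℝ)]
  have hsum : ∑ k : Fin (N + 1), ((k : ℝ) + 1 / 2) * (N + 1 - (k + 1 / 2)) =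
      ((N : ℝ) + 1) ^ 3 / 6 + (N + 1) / 12 := by
    rw [Fin.sum_univ_eq_sum_range (fun k => ((k : ℝ) + 1 / 2) * (N + 1 - (k + 1 / 2))),
      sum_range_add_half_mul]
    push_cast
    ring
  calc (8 : ℝ) / 27 ≤ 8 * π / 81 := by linarith [Real.pi_gt_three]
    _ = 1 / (3 * π ^ 2) * (2 * π / 3) ^ 3 := by field_simp; norm_num
    _ ≤ 1 / (3 * π ^ 2) * ((N + 1) * h) ^ 3 := by gcongr
    _ ≤ h * (2 / π ^ 2 * h ^ 2 * (((N : ℝ) + 1) ^ 3 / 6 + (N + 1) / 12)) := by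
      have : 0 ≤ h ^ 3 * (N + 1) / (6 * π ^ 2) := by positivity
      linarith [show h * (2 / π ^ 2 * h ^ 2 * (((N : ℝ) + 1) ^ 3 / 6 + (N + 1) / 12)) =
        1 / (3 * π ^ 2) * ((N + 1) * h) ^ 3 + h ^ 3 * (N + 1) / (6 * π ^ 2) by field_simp; ring]
    _ ≤ h * ∑ k, Real.sin (θ k) := by
      rw [← hsum, mul_sum]
      gcongr with k
      exact hθ.mul_sub_le_sin k

end IsQuasiUniform

namespace IsGaussRule

section WeightPhase

variable {N : ℕ} {x w : Fin (N + 1) → ℝ}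

lemma nodeAngle_mem_bulk (h : IsGaussRule x w) (hx : StrictAnti x) (k : Fin (N + 1)) :
    nodeAngle x k ∈ bulk (N + 1) :=
  (h.isQuasiUniform hx).mem_Icc k

theorem christoffelConst_le (h : IsGaussRule x w) (hx : StrictAnti x) {t : ℝ}
    (ht : t ∈ bulk (N + 1)) : christoffelConst x ≤
      20 * mesh (N + 1) * ‖legendreAmplitude (N + 1) (Lagrange.nodal univ x) t‖ ^ 2 := by
  have hθ := h.isQuasiUniform hx
  set Z := legendreAmplitude (N + 1) (Lagrange.nodal univ x)
  have hsum : christoffelConst x * ∑ k, Real.sin (nodeAngle x k) ≤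
      2 * (Real.exp 1 * ‖Z t‖ ^ 2) := by
    rw [← h.sum_weights, sum_mul, mul_sum]
    refine sum_le_sum fun k _ => ?_
    rw [← h.weight_mul_norm_sq_legendreAmplitude k]
    exact mul_le_mul_of_nonneg_left
      (h.isMonicLegendre_nodal.norm_sq_legendreAmplitude_le (h.nodeAngle_mem_bulk hx k) ht)
      (h.weight_pos k).le
  have he : Real.exp 1 * (mesh (N + 1) * ‖Z t‖ ^ 2) ≤
      2.72 * (mesh (N + 1) * ‖Z t‖ ^ 2) :=
    mul_le_mul_of_nonneg_right (by linarith [Real.exp_one_lt_d9])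
      (mul_nonneg (mesh_pos _).le (sq_nonneg _))
  linarith [mul_le_mul_of_nonneg_left hsum (mesh_pos (N + 1)).le,
    mul_le_mul_of_nonneg_left hθ.le_mul_sum_sin (christoffelConst_pos x).le,
    mul_nonneg (mesh_pos (N + 1)).le (sq_nonneg ‖Z t‖)]

lemma legendreAmplitude_ne_zero (h : IsGaussRule x w) (hx : StrictAnti x) {t : ℝ}
    (ht : t ∈ bulk (N + 1)) :
    legendreAmplitude (N + 1) (Lagrange.nodal univ x) t ≠ 0 := fun hzero => by
  have := h.christoffelConst_le hx ht
  rw [hzero, norm_zero] at this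
  linarith [christoffelConst_pos x]

lemma norm_weightPhase_le (h : IsGaussRule x w) (hx : StrictAnti x) (q : ℕ) {t : ℝ}
    (ht : t ∈ bulk (N + 1)) : ‖weightPhase x q t‖ ≤ 20 * mesh (N + 1) * Real.sin t := by
  have hsin := Real.sin_pos_of_mem_Ioo (bulk_subset_Ioo _ ht)
  have hZ := norm_pos_iff.mpr (h.legendreAmplitude_ne_zero hx ht)
  rw [norm_weightPhase x q hsin.le, div_le_iff₀ (by positivity), mul_right_comm]
  exact mul_le_mul_of_nonneg_right (h.christoffelConst_le hx ht) hsin.le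

lemma exists_hasDerivAt_weightPhase (h : IsGaussRule x w) (hx : StrictAnti x) (q : ℕ) {t : ℝ}
    (ht : t ∈ bulk (N + 1)) : ∃ D, HasDerivAt (weightPhase x q) D t ∧
      ‖D‖ ≤ 40 * (q + 1) * mesh (N + 1) := by
  set κ := christoffelConst x
  set Z := legendreAmplitude (N + 1) (Lagrange.nodal univ x)
  have htIoo := bulk_subset_Ioo _ ht
  have hκ := christoffelConst_pos x
  have hsin := Real.sin_pos_of_mem_Ioo htIoo
  have hZpos : 0 < ‖Z t‖ := norm_pos_iff.mpr (h.legendreAmplitude_ne_zero hx ht)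
  obtain ⟨D₀, hD₀, hD₀le⟩ := exists_hasDerivAt_conj_pow_div_pow
    (h.isMonicLegendre_nodal.hasDerivAt_legendreAmplitude htIoo) (norm_pos_iff.mp hZpos) q
  refine ⟨_, ((Real.hasDerivAt_sin t).const_mul κ).ofReal_comp.mul hD₀, ?_⟩
  have hcos : ‖((κ * Real.cos t : ℝ) : ℂ) * (conj (Z t) ^ q / Z t ^ (q + 2))‖ ≤
      κ / ‖Z t‖ ^ 2 := by
    rw [norm_mul, norm_div, norm_pow, norm_pow, RCLike.norm_conj, Complex.norm_real,
      Real.norm_eq_abs, abs_mul, abs_of_pos hκ]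
    calc κ * |Real.cos t| * (‖Z t‖ ^ q / ‖Z t‖ ^ (q + 2))
        ≤ κ * 1 * (‖Z t‖ ^ q / ‖Z t‖ ^ (q + 2)) := by gcongr; exact Real.abs_cos_le_one t
      _ = κ / ‖Z t‖ ^ 2 := by field_simp; ring
  have hderiv : ‖((κ * Real.sin t : ℝ) : ℂ) * D₀‖ ≤ (q + 1) / 2 * (κ / ‖Z t‖ ^ 2) := by
    rw [norm_mul, Complex.norm_real, Real.norm_of_nonneg (by positivity)]
    calc κ * Real.sin t * ‖D₀‖ ≤ κ * Real.sin t * (2 * (q + 1) * ‖deriv Z t‖ / ‖Z t‖ ^ 3) := by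
          gcongr
      _ = κ * (2 * (q + 1)) / ‖Z t‖ ^ 3 * (Real.sin t * ‖deriv Z t‖) := by ring
      _ ≤ κ * (2 * (q + 1)) / ‖Z t‖ ^ 3 * (‖Z t‖ / 4) := by
          gcongr
          exact h.isMonicLegendre_nodal.sin_mul_norm_deriv_legendreAmplitude_le ht
      _ = (q + 1) / 2 * (κ / ‖Z t‖ ^ 2) := by field_simp; norm_num
  have hκle : κ / ‖Z t‖ ^ 2 ≤ 20 * mesh (N + 1) :=
    (div_le_iff₀ (by positivity)).mpr (h.christoffelConst_le hx ht)
  calc ‖_ + _‖ ≤ κ / ‖Z t‖ ^ 2 + (q + 1) / 2 * (κ / ‖Z t‖ ^ 2) :=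
        (norm_add_le _ _).trans (add_le_add hcos hderiv)
    _ ≤ 2 * (q + 1) * (κ / ‖Z t‖ ^ 2) := by
        rw [← one_add_mul]
        gcongr
        linarith [q.cast_nonneg (α := ℝ)]
    _ ≤ 2 * (q + 1) * (20 * mesh (N + 1)) := by gcongr
    _ = 40 * (q + 1) * mesh (N + 1) := by ring

lemma norm_weightPhase_sub_le (h : IsGaussRule x w) (hx : StrictAnti x) (q : ℕ) (k : Fin N) :
    ‖weightPhase x q (nodeAngle x k.succ) - weightPhase x q (nodeAngle x k.castSucc)‖ ≤
      40 * (q + 1) * mesh (N + 1) ^ 2 := by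
  choose! D hD hDle using fun t (ht : t ∈ bulk (N + 1)) =>
    h.exists_hasDerivAt_weightPhase hx q ht
  have hgap := h.strictMono_nodeAngle hx k.castSucc_lt_succ
  refine ((convex_Icc _ _).norm_image_sub_le_of_norm_hasDerivWithin_le
    (fun t ht => (hD t ht).hasDerivWithinAt) hDle (h.nodeAngle_mem_bulk hx _)
    (h.nodeAngle_mem_bulk hx _)).trans ?_
  have hmesh := mesh_pos (N + 1)
  rw [Real.norm_of_nonneg (sub_nonneg.mpr hgap.le), sq, ← mul_assoc]
  gcongr
  exact (h.isQuasiUniform hx).gap_le k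

end WeightPhase

end IsGaussRule

end Amplitude

section LargeSieve

lemma norm_sq_sum_indicator {ι : Type*} [Fintype ι] {I : ι → Set ℝ}
    (hI : Pairwise fun k l => Disjoint (I k) (I l)) (d : ι → ℂ) (t : ℝ) :
    ‖∑ k, (I k).indicator (fun _ => d k) t‖ ^ 2 =
      ∑ k, (I k).indicator (fun _ => ‖d k‖ ^ 2) t := by
  by_cases hmem : ∃ k, t ∈ I k
  · obtain ⟨k, hk⟩ := hmem
    have hne : ∀ l, l ≠ k → t ∉ I l := fun l hl => Set.disjoint_right.mp (hI hl) hk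
    rw [Fintype.sum_eq_single k fun l hl => Set.indicator_of_notMem (hne l hl) _,
      Fintype.sum_eq_single k fun l hl => Set.indicator_of_notMem (hne l hl) _,
      Set.indicator_of_mem hk, Set.indicator_of_mem hk]
  · push Not at hmem
    simp [Set.indicator_of_notMem (hmem _)]

lemma integral_mul_sum_indicator {ι 𝕜 : Type*} [Fintype ι] [RCLike 𝕜] {a b : ℝ} {u v : ι → ℝ}
    (huv : ∀ k, u k ≤ v k) (ha : ∀ k, a ≤ u k) (hb : ∀ k, v k ≤ b) {g : ℝ → 𝕜}
    (hg : Continuous g) (d : ι → 𝕜) :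
    ∫ t in a..b, g t * ∑ k, (Set.Ioc (u k) (v k)).indicator (fun _ => d k) t =
      ∑ k, (∫ t in u k..v k, g t) * d k := by
  have hcont : ∀ k, IntervalIntegrable (fun t => g t * d k) MeasureTheory.volume a b :=
    fun k => (hg.mul continuous_const).intervalIntegrable a b
  simp only [mul_sum, ← Set.indicator_mul_right]
  rw [intervalIntegral.integral_finsetSum fun k _ =>
    ⟨(hcont k).1.indicator measurableSet_Ioc, (hcont k).2.indicator measurableSet_Ioc⟩]
  refine sum_congr rfl fun k _ => ?_
  rw [intervalIntegral.integral_of_le ((ha k).trans ((huv k).trans (hb k))),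
    MeasureTheory.setIntegral_indicator measurableSet_Ioc, Set.Ioc_inter_Ioc, max_eq_right (ha k),
    min_eq_right (hb k), ← intervalIntegral.integral_of_le (huv k),
    intervalIntegral.integral_mul_const]

lemma le_norm_integral_exp {a y : ℝ} (ha : 0 ≤ a) (hy : |y| * a ≤ 1) :
    a ≤ ‖∫ t in -a..a, Complex.exp (Complex.I * (y * t))‖ := by
  have hcont : Continuous fun t : ℝ => Complex.exp (Complex.I * (y * t)) := by fun_prop
  have hre : (∫ t in -a..a, Complex.exp (Complex.I * (y * t))).re =
      ∫ t in -a..a, Real.cos (y * t) := by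
    rw [← Complex.reCLM_apply, ← Complex.reCLM.intervalIntegral_comp_comm
      (hcont.intervalIntegrable _ _)]
    refine intervalIntegral.integral_congr fun t _ => ?_
    simp [Complex.exp_re]
  have hcos : ∀ t ∈ Set.Icc (-a) a, 1 / 2 ≤ Real.cos (y * t) := fun t ht => by
    have habs : |y * t| ≤ 1 := by
      rw [abs_mul]
      exact (mul_le_mul_of_nonneg_left (abs_le.mpr ht) (abs_nonneg y)).trans hy
    linarith [Real.one_sub_sq_div_two_le_cos (x := y * t), (sq_le_one_iff_abs_le_one _).mpr habs]
  calc a = ∫ _ in -a..a, (1 / 2 : ℝ) := by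
        rw [intervalIntegral.integral_const, smul_eq_mul]
        ring
    _ ≤ ∫ t in -a..a, Real.cos (y * t) :=
        intervalIntegral.integral_mono_on (by linarith) intervalIntegrable_const
          (Continuous.intervalIntegrable (by fun_prop) _ _) hcos
    _ ≤ ‖∫ t in -a..a, Complex.exp (Complex.I * (y * t))‖ := hre ▸ Complex.re_le_norm _

lemma integral_exp_sub_add (θ a y : ℝ) : ∫ t in θ - a..θ + a, Complex.exp (Complex.I * (y * t)) =
    Complex.exp (Complex.I * (y * θ)) * ∫ t in -a..a, Complex.exp (Complex.I * (y * t)) := by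
  have := intervalIntegral.integral_comp_add_left
    (fun t : ℝ => Complex.exp (Complex.I * (y * t))) θ (a := -a) (b := a)
  rw [← sub_eq_add_neg] at this
  rw [← this, ← intervalIntegral.integral_const_mul]
  refine intervalIntegral.integral_congr fun t _ => ?_
  simp only [← Complex.exp_add]
  push_cast
  ring_nf

/-- The exponential sum with coefficients `c`, frequencies `θ`, evaluated at `j`. -/
noncomputable def expSum {ι : Type*} [Fintype ι] (θ : ι → ℝ) (c : ι → ℂ) (j : ℤ) : ℂ :=
  ∑ k, c k * Complex.exp (Complex.I * (j * θ k))

variable {ι : Type*} [Fintype ι] {θ : ι → ℝ} {δ : ℝ}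

/-- The function taking the value `d k` on the interval of length `δ` around `θ k`, for disjoint
such intervals. -/
noncomputable def stepFunction (θ : ι → ℝ) (δ : ℝ) (d : ι → ℂ) (t : ℝ) : ℂ :=
  ∑ k, (Set.Ioc (θ k - δ / 2) (θ k + δ / 2)).indicator (fun _ => d k) t

lemma memLp_stepFunction (θ : ι → ℝ) (δ : ℝ) (d : ι → ℂ) (s : Set ℝ) :
    MeasureTheory.MemLp (stepFunction θ δ d) 2 (MeasureTheory.volume.restrict s) :=
  MeasureTheory.memLp_finsetSum _ fun _ _ => MeasureTheory.memLp_indicator_const _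
    measurableSet_Ioc _
      (.inr ((MeasureTheory.Measure.restrict_apply_le _ _).trans_lt measure_Ioc_lt_top).ne)

lemma integral_norm_sq_stepFunction (hδ : 0 < δ) (hsep : Pairwise fun k l => δ ≤ |θ k - θ l|)
    {a b : ℝ} (hθ : ∀ k, θ k ∈ Set.Icc (a + δ / 2) (b - δ / 2)) (d : ι → ℂ) :
    ∫ t in a..b, ‖stepFunction θ δ d t‖ ^ 2 = δ * ∑ k, ‖d k‖ ^ 2 := by
  have hdisj : Pairwise fun k l => Disjoint (Set.Ioc (θ k - δ / 2) (θ k + δ / 2))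
      (Set.Ioc (θ l - δ / 2) (θ l + δ / 2)) := fun k l hkl => by
    refine Set.Ioc_disjoint_Ioc.mpr (min_le_iff.mpr ?_)
    rw [le_max_iff, le_max_iff]
    rcases le_abs.mp (hsep hkl) with h | h
    · exact .inr (.inl (by linarith))
    · exact .inl (.inr (by linarith))
  simp only [stepFunction, norm_sq_sum_indicator hdisj]
  have := integral_mul_sum_indicator (a := a) (b := b)
    (fun k => by linarith : ∀ k, θ k - δ / 2 ≤ θ k + δ / 2)
    (fun k => by linarith [(hθ k).1]) (fun k => by linarith [(hθ k).2])
    (continuous_const (y := (1 : ℝ))) fun k => ‖d k‖ ^ 2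
  simp only [one_mul, intervalIntegral.integral_const, smul_eq_mul, mul_one] at this
  rw [this, mul_sum]
  exact sum_congr rfl fun k _ => by ring

lemma fourierCoeffOn_stepFunction (hδ : 0 < δ)
    (hθ : ∀ k, θ k ∈ Set.Icc (δ / 2) (2 * π - δ / 2)) (d : ι → ℂ) (j : ℤ) :
    fourierCoeffOn Real.two_pi_pos (stepFunction θ δ d) (-j) =
      (1 / (2 * π) : ℝ) * (expSum θ d j *
        ∫ t in -(δ / 2)..δ / 2, Complex.exp (Complex.I * ((j : ℝ) * t))) := by
  have hexp : ∀ t : ℝ, fourier j (t : AddCircle (2 * π - 0)) =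
      Complex.exp (Complex.I * ((j : ℝ) * t)) := fun t => by
    rw [fourier_coe_apply]
    congr 1
    rw [sub_zero]
    push_cast
    field_simp
  rw [fourierCoeffOn_eq_integral, neg_neg]
  simp only [hexp, smul_eq_mul, stepFunction]
  rw [sub_zero, Complex.real_smul, integral_mul_sum_indicator (fun k => by linarith)
    (fun k => by linarith [(hθ k).1]) (fun k => by linarith [(hθ k).2]) (by fun_prop), expSum,
    sum_mul]
  congr 1
  refine sum_congr rfl fun k _ => ?_
  rw [integral_exp_sub_add, Complex.ofReal_intCast]
  ring

-- Bessel's inequality for the step function taking the value `d k` within `δ / 2` of `θ k`.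
theorem sum_norm_sq_expSum_le (hδ : 0 < δ) (hsep : Pairwise fun k l => δ ≤ |θ k - θ l|)
    (hθ : ∀ k, θ k ∈ Set.Icc (δ / 2) (2 * π - δ / 2)) (d : ι → ℂ) {F : Finset ℤ}
    (hF : ∀ j ∈ F, |(j : ℝ)| * δ ≤ 2) :
    ∑ j ∈ F, ‖expSum θ d j‖ ^ 2 ≤ 8 * π / δ * ∑ k, ‖d k‖ ^ 2 := by
  have hparseval : HasSum
      (fun j : ℤ => ‖fourierCoeffOn Real.two_pi_pos (stepFunction θ δ d) (-j)‖ ^ 2) _ :=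
    (Equiv.neg ℤ).hasSum_iff.mpr
      (hasSum_sq_fourierCoeffOn Real.two_pi_pos (memLp_stepFunction θ δ d _))
  have hbessel := sum_le_hasSum F (fun _ _ => sq_nonneg _) hparseval
  rw [integral_norm_sq_stepFunction hδ hsep (by simpa using hθ), sub_zero, smul_eq_mul] at hbessel
  have hterm : ∀ j ∈ F, (δ / (4 * π)) ^ 2 * ‖expSum θ d j‖ ^ 2 ≤
      ‖fourierCoeffOn Real.two_pi_pos (stepFunction θ δ d) (-j)‖ ^ 2 := fun j hj => by
    have hmass := le_norm_integral_exp (half_pos hδ).le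
      (by linarith [hF j hj] : |(j : ℝ)| * (δ / 2) ≤ 1)
    rw [fourierCoeffOn_stepFunction hδ hθ, norm_mul, norm_mul, Complex.norm_real,
      Real.norm_of_nonneg (by positivity), ← mul_pow]
    refine pow_le_pow_left₀ (by positivity) ?_ 2
    calc δ / (4 * π) * ‖expSum θ d j‖ = 1 / (2 * π) * (‖expSum θ d j‖ * (δ / 2)) := by ring
      _ ≤ _ := by gcongr
  have hsum : (δ / (4 * π)) ^ 2 * ∑ j ∈ F, ‖expSum θ d j‖ ^ 2 ≤
      (2 * π)⁻¹ * (δ * ∑ k, ‖d k‖ ^ 2) := by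
    rw [mul_sum]
    exact (sum_le_sum hterm).trans hbessel
  calc ∑ j ∈ F, ‖expSum θ d j‖ ^ 2
      = (4 * π / δ) ^ 2 * ((δ / (4 * π)) ^ 2 * ∑ j ∈ F, ‖expSum θ d j‖ ^ 2) := by field_simp
    _ ≤ (4 * π / δ) ^ 2 * ((2 * π)⁻¹ * (δ * ∑ k, ‖d k‖ ^ 2)) := by gcongr
    _ = 8 * π / δ * ∑ k, ‖d k‖ ^ 2 := by field_simp; ring

end LargeSieve

section AbelSummation

/-- Coefficients of size `O(M h)`, with increments and end values of size `O(M h²)`. -/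
structure IsSlowlyVarying {N : ℕ} (c : Fin (N + 1) → ℂ) (h M : ℝ) : Prop where
  norm_le : ∀ k, ‖c k‖ ≤ M * h
  norm_sub_le : ∀ k : Fin N, ‖c k.succ - c k.castSucc‖ ≤ M * h ^ 2
  norm_first_le : ‖c 0‖ ≤ M * h ^ 2
  norm_last_le : ‖c (Fin.last N)‖ ≤ M * h ^ 2

/-- The increments `c 0, c 1 - c 0, …, c N - c (N - 1)`. -/
def increments {N : ℕ} (c : Fin (N + 1) → ℂ) : Fin (N + 1) → ℂ :=
  Fin.cons (c 0) fun k => c k.succ - c k.castSucc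

-- Summation by parts against the model progression `θ k ≈ k h`.
theorem one_sub_exp_mul_expSum {N : ℕ} (θ : Fin (N + 1) → ℝ) (h : ℝ) (c : Fin (N + 1) → ℂ)
    (j : ℤ) : (1 - Complex.exp (Complex.I * (j * h))) * expSum θ c j =
      expSum θ (increments c) j +
        ∑ k : Fin N, c k.castSucc * (Complex.exp (Complex.I * (j * θ k.succ)) -
          Complex.exp (Complex.I * (j * h)) * Complex.exp (Complex.I * (j * θ k.castSucc))) -
        Complex.exp (Complex.I * (j * h)) *
          (c (Fin.last N) * Complex.exp (Complex.I * (j * θ (Fin.last N)))) := by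
  have hfirst : expSum θ c j = c 0 * Complex.exp (Complex.I * (j * θ 0)) +
      ∑ k : Fin N, c k.succ * Complex.exp (Complex.I * (j * θ k.succ)) := Fin.sum_univ_succ _
  have hlast : expSum θ c j =
      ∑ k : Fin N, c k.castSucc * Complex.exp (Complex.I * (j * θ k.castSucc)) +
        c (Fin.last N) * Complex.exp (Complex.I * (j * θ (Fin.last N))) := Fin.sum_univ_castSucc _
  have hincr : expSum θ (increments c) j = c 0 * Complex.exp (Complex.I * (j * θ 0)) +
      ∑ k : Fin N, (c k.succ - c k.castSucc) * Complex.exp (Complex.I * (j * θ k.succ)) :=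
    Fin.sum_univ_succ _
  simp only [sub_mul, sum_sub_distrib] at hincr
  simp only [mul_sub, sum_sub_distrib, mul_left_comm (c _) (Complex.exp (Complex.I * (j * h))),
    ← mul_sum]
  linear_combination hfirst - Complex.exp (Complex.I * (j * h)) * hlast - hincr

lemma norm_exp_I_mul_sub_le (a b : ℝ) :
    ‖Complex.exp (Complex.I * a) - Complex.exp (Complex.I * b)‖ ≤ |a - b| := by
  have hfactor : Complex.exp (Complex.I * a) - Complex.exp (Complex.I * b) =
      Complex.exp (b * Complex.I) * (Complex.exp (Complex.I * (a - b : ℝ)) - 1) := by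
    rw [mul_sub_one, ← Complex.exp_add]
    push_cast
    ring_nf
  rw [hfactor, norm_mul, Complex.norm_exp_ofReal_mul_I, one_mul]
  exact Real.norm_exp_I_mul_ofReal_sub_one_le

lemma two_div_pi_mul_abs_le_norm_one_sub_exp {a : ℝ} (ha : |a| ≤ π) :
    2 / π * |a| ≤ ‖1 - Complex.exp (Complex.I * a)‖ := by
  rw [norm_sub_rev, Complex.norm_exp_I_mul_ofReal_sub_one, norm_mul, Real.norm_ofNat,
    Real.norm_eq_abs]
  have := Real.mul_abs_le_abs_sin (x := a / 2) (by rw [abs_div, Nat.abs_ofNat]; linarith)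
  rw [abs_div, Nat.abs_ofNat] at this
  linarith

variable {N : ℕ} {θ : Fin (N + 1) → ℝ} {h M : ℝ} {c : Fin (N + 1) → ℂ}

lemma IsSlowlyVarying.norm_increments_le (hc : IsSlowlyVarying c h M) (k : Fin (N + 1)) :
    ‖increments c k‖ ≤ M * h ^ 2 := by
  cases k using Fin.cases with
  | zero => exact hc.norm_first_le
  | succ k => exact hc.norm_sub_le k

namespace IsQuasiUniform

lemma norm_sum_mul_exp_sub_le (hθ : IsQuasiUniform θ h) (hc : IsSlowlyVarying c h M) (hM : 0 ≤ M)
    (j : ℤ) : ‖∑ k : Fin N, c k.castSucc * (Complex.exp (Complex.I * (j * θ k.succ)) -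
      Complex.exp (Complex.I * (j * h)) * Complex.exp (Complex.I * (j * θ k.castSucc)))‖ ≤
        M * |(j : ℝ)| * h ^ 2 / 2 := by
  have hh := hθ.pos
  have hterm : ∀ k : Fin N, ‖Complex.exp (Complex.I * (j * θ k.succ)) -
      Complex.exp (Complex.I * (j * h)) * Complex.exp (Complex.I * (j * θ k.castSucc))‖ ≤
        |(j : ℝ)| * (h - (θ k.succ - θ k.castSucc)) := fun k => by
    have := norm_exp_I_mul_sub_le (j * θ k.succ) (j * (h + θ k.castSucc))
    rw [← mul_sub, abs_mul, abs_sub_comm, ← sub_sub_eq_add_sub h,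
      abs_of_nonneg (sub_nonneg.mpr (hθ.gap_le k))] at this
    rw [← Complex.exp_add, ← mul_add, ← mul_add]
    exact_mod_cast this
  refine (norm_sum_le _ _).trans ?_
  calc ∑ k : Fin N, ‖c k.castSucc * _‖
      ≤ ∑ k : Fin N, M * h * (|(j : ℝ)| * (h - (θ k.succ - θ k.castSucc))) := by
        refine sum_le_sum fun k _ => (norm_mul_le _ _).trans ?_
        gcongr
        exacts [hc.norm_le _, hterm k]
    _ = M * h * |(j : ℝ)| * ∑ k : Fin N, (h - (θ k.succ - θ k.castSucc)) := by
        rw [mul_sum]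
        exact sum_congr rfl fun k _ => by ring
    _ ≤ M * h * |(j : ℝ)| * (h / 2) := by
        gcongr
        exact hθ.sum_gap_defect_le
    _ = M * |(j : ℝ)| * h ^ 2 / 2 := by ring

lemma mul_norm_expSum_le (hθ : IsQuasiUniform θ h) (hc : IsSlowlyVarying c h M) (hM : 0 ≤ M)
    {j : ℤ} (hj : j ≠ 0) (hjN : |(j : ℝ)| ≤ N + 1) : 2 / π * (|(j : ℝ)| * h) * ‖expSum θ c j‖ ≤
      ‖expSum θ (increments c) j‖ + 2 * M * |(j : ℝ)| * h ^ 2 := by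
  have hh := hθ.pos
  have hj1 : 1 ≤ |(j : ℝ)| := by exact_mod_cast Int.one_le_abs hj
  have hstep : 2 / π * (|(j : ℝ)| * h) ≤ ‖1 - Complex.exp (Complex.I * (j * h))‖ := by
    have hangle : |(j * h : ℝ)| ≤ π := by
      rw [abs_mul, abs_of_pos hh, ← hθ.mul_eq]
      gcongr
      linarith
    simpa [abs_mul, abs_of_pos hh] using two_div_pi_mul_abs_le_norm_one_sub_exp hangle
  have hunit : ∀ a : ℝ, ‖Complex.exp (Complex.I * (j * a))‖ = 1 := fun a => by
    simp [Complex.norm_exp]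
  calc 2 / π * (|(j : ℝ)| * h) * ‖expSum θ c j‖
      ≤ ‖(1 - Complex.exp (Complex.I * (j * h))) * expSum θ c j‖ := by
        rw [norm_mul]
        gcongr
    _ ≤ ‖expSum θ (increments c) j‖ + M * |(j : ℝ)| * h ^ 2 / 2 + M * h ^ 2 := by
        rw [one_sub_exp_mul_expSum]
        refine (norm_sub_le _ _).trans (add_le_add ((norm_add_le _ _).trans
          (add_le_add_right (hθ.norm_sum_mul_exp_sub_le hc hM j) _)) ?_)
        rw [norm_mul, norm_mul, hunit, hunit, one_mul, mul_one]
        exact hc.norm_last_le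
    _ ≤ ‖expSum θ (increments c) j‖ + 2 * M * |(j : ℝ)| * h ^ 2 := by
        have hMh : 0 ≤ M * h ^ 2 := by positivity
        linarith [mul_le_mul_of_nonneg_left hj1 hMh]

lemma norm_expSum_le (hθ : IsQuasiUniform θ h) (hc : IsSlowlyVarying c h M) (hM : 0 < M)
    {j : ℤ} (hj : j ≠ 0) (hjN : |(j : ℝ)| ≤ N + 1) :
    ‖expSum θ c j‖ ≤ π / 2 * (‖expSum θ (increments c) j‖ ^ 2 / (2 * M * h ^ 2) +
      M / 2 * (1 / (j : ℝ) ^ 2) + 2 * M * h) := by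
  have hh := hθ.pos
  have : 0 < |(j : ℝ)| := abs_pos.mpr (Int.cast_ne_zero.mpr hj)
  set B := ‖expSum θ (increments c) j‖
  have hamgm : B / h * (1 / |(j : ℝ)|) ≤ B ^ 2 / (2 * M * h ^ 2) + M / 2 * (1 / (j : ℝ) ^ 2) := by
    have hsq : 0 ≤ (B / h - M * (1 / |(j : ℝ)|)) ^ 2 / (2 * M) := by positivity
    refine sub_nonneg.mp (hsq.trans_eq ?_)
    rw [← sq_abs (j : ℝ)]
    field_simp
    ring
  calc ‖expSum θ c j‖
      = π / 2 * (2 / π * (|(j : ℝ)| * h) * ‖expSum θ c j‖ / (|(j : ℝ)| * h)) := by field_simp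
    _ ≤ π / 2 * ((B + 2 * M * |(j : ℝ)| * h ^ 2) / (|(j : ℝ)| * h)) := by
        gcongr
        exact hθ.mul_norm_expSum_le hc hM.le hj hjN
    _ = π / 2 * (B / h * (1 / |(j : ℝ)|) + 2 * M * h) := by field_simp
    _ ≤ _ := by gcongr

lemma half_step_le_abs_sub (hθ : IsQuasiUniform θ h) {k l : Fin (N + 1)} (hkl : k ≠ l) :
    h / 2 ≤ |θ k - θ l| := by
  wlog hlt : l < k generalizing k l
  · rw [abs_sub_comm]
    exact this hkl.symm (lt_of_le_of_ne (not_lt.mp hlt) hkl)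
  have hcast : (l : ℝ) + 1 ≤ k := by exact_mod_cast hlt
  have hmul := mul_le_mul_of_nonneg_right hcast hθ.pos.le
  exact le_abs.mpr (.inl (by linarith [hθ.mul_le k, hθ.le_mul l]))

lemma sum_norm_sq_expSum_increments_le (hθ : IsQuasiUniform θ h) (hc : IsSlowlyVarying c h M) :
    ∑ j ∈ Icc (-(N + 1) : ℤ) (N + 1), ‖expSum θ (increments c) j‖ ^ 2 ≤
      16 * π ^ 2 * (M * h) ^ 2 := by
  have hh := hθ.pos
  have hNh : (N + 1) * h ≤ π := by linarith [hθ.mul_eq]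
  have hsieve := sum_norm_sq_expSum_le (half_pos hh) (fun k l hkl => hθ.half_step_le_abs_sub hkl)
    (fun k => ⟨by linarith [(hθ.mem_Icc k).1], by linarith [(hθ.mem_Icc k).2, Real.pi_pos]⟩)
    (increments c) (F := Icc (-(N + 1) : ℤ) (N + 1)) fun j hj => by
      have hjN : |(j : ℝ)| ≤ N + 1 := by exact_mod_cast abs_le.mpr (Finset.mem_Icc.mp hj)
      linarith [mul_le_mul_of_nonneg_right hjN hh.le, Real.pi_le_four]
  calc _ ≤ 8 * π / (h / 2) * ∑ k, ‖increments c k‖ ^ 2 := hsieve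
    _ ≤ 8 * π / (h / 2) * ∑ _ : Fin (N + 1), (M * h ^ 2) ^ 2 := by
        gcongr with k
        exact hc.norm_increments_le k
    _ = 16 * π * (M * h) ^ 2 * ((N + 1) * h) := by
        rw [sum_const, card_univ, Fintype.card_fin, nsmul_eq_mul]
        push_cast
        field_simp
        ring
    _ ≤ 16 * π * (M * h) ^ 2 * π := by gcongr
    _ = 16 * π ^ 2 * (M * h) ^ 2 := by ring

lemma norm_expSum_zero_le (hθ : IsQuasiUniform θ h) (hc : IsSlowlyVarying c h M) (hM : 0 ≤ M) :
    ‖expSum θ c 0‖ ≤ π * M := by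
  have hh := hθ.pos
  calc ‖expSum θ c 0‖ ≤ ∑ _ : Fin (N + 1), M * h :=
        norm_sum_le_of_le _ fun k _ => by simpa using hc.norm_le k
    _ = (N + 1) * h * M := by
        rw [sum_const, card_univ, Fintype.card_fin, nsmul_eq_mul]
        push_cast
        ring
    _ ≤ π * M := by
        gcongr
        linarith [hθ.mul_eq]

theorem sum_norm_expSum_le (hθ : IsQuasiUniform θ h) (hc : IsSlowlyVarying c h M) (hM : 0 < M) :
    ∑ j ∈ Icc (-(N + 1) : ℤ) (N + 1), ‖expSum θ c j‖ ≤
      (π + π / 2 * (8 * π ^ 2 + (∑' j : ℤ, 1 / (j : ℝ) ^ 2) / 2 + 4 * π)) * M := by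
  have hh := hθ.pos
  set F := Icc (-(N + 1) : ℤ) (N + 1)
  have hzero : (0 : ℤ) ∈ F := Finset.mem_Icc.mpr ⟨by lia, by lia⟩
  have hincr : ∑ j ∈ F.erase 0, ‖expSum θ (increments c) j‖ ^ 2 / (2 * M * h ^ 2) ≤
      8 * π ^ 2 * M := by
    rw [← sum_div, div_le_iff₀ (by positivity)]
    calc _ ≤ ∑ j ∈ F, ‖expSum θ (increments c) j‖ ^ 2 :=
          sum_le_sum_of_subset_of_nonneg (erase_subset _ _) fun _ _ _ => sq_nonneg _
      _ ≤ 16 * π ^ 2 * (M * h) ^ 2 := hθ.sum_norm_sq_expSum_increments_le hc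
      _ = 8 * π ^ 2 * M * (2 * M * h ^ 2) := by ring
  have hrecip : ∑ j ∈ F.erase 0, M / 2 * (1 / (j : ℝ) ^ 2) ≤
      M / 2 * ∑' j : ℤ, 1 / (j : ℝ) ^ 2 := by
    rw [← mul_sum]
    gcongr
    exact (Real.summable_one_div_int_pow.mpr one_lt_two).sum_le_tsum _ fun _ _ => by positivity
  have hcard : ∑ _j ∈ F.erase 0, 2 * M * h ≤ 4 * π * M := by
    have : (F.erase 0).card = 2 * (N + 1) := by
      rw [card_erase_of_mem hzero, Int.card_Icc]
      lia
    rw [sum_const, this, nsmul_eq_mul]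
    push_cast
    linarith [mul_le_mul_of_nonneg_right hθ.mul_eq.le hM.le, mul_pos hh hM]
  rw [← add_sum_erase F _ hzero]
  calc ‖expSum θ c 0‖ + ∑ j ∈ F.erase 0, ‖expSum θ c j‖
      ≤ π * M + ∑ j ∈ F.erase 0, π / 2 * (‖expSum θ (increments c) j‖ ^ 2 / (2 * M * h ^ 2) +
          M / 2 * (1 / (j : ℝ) ^ 2) + 2 * M * h) := by
        refine add_le_add (hθ.norm_expSum_zero_le hc hM.le) (sum_le_sum fun j hj => ?_)
        refine hθ.norm_expSum_le hc hM (ne_of_mem_erase hj) ?_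
        exact_mod_cast abs_le.mpr (Finset.mem_Icc.mp (mem_of_mem_erase hj))
    _ ≤ π * M + π / 2 * (8 * π ^ 2 * M + M / 2 * (∑' j : ℤ, 1 / (j : ℝ) ^ 2) + 4 * π * M) := by
        rw [← mul_sum, sum_add_distrib, sum_add_distrib]
        gcongr
    _ = _ := by ring

end IsQuasiUniform

end AbelSummation

section ChebyshevModes

/-- The error of the quadrature rule with nodes `x` and weights `w` on `[-1, 1]`. -/
noncomputable def quadratureError {n : ℕ} (x w : Fin n → ℝ) (f : ℝ → ℝ) : ℝ :=
  (∫ t in (-1 : ℝ)..1, f t) - ∑ k, w k * f (x k)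

theorem integral_chebyshev_T {m : ℤ} (hm : m ≠ 1) (hm' : m ≠ -1) :
    ∫ t in (-1 : ℝ)..1, (Chebyshev.T ℝ m).eval t =
      (1 + (m.negOnePow : ℝ)) / (1 - (m : ℝ) ^ 2) := by
  have hpred : (m : ℝ) - 1 ≠ 0 := sub_ne_zero.2 (mod_cast hm)
  have hsucc : (m : ℝ) + 1 ≠ 0 := by
    rw [← sub_neg_eq_add]
    exact sub_ne_zero.2 (mod_cast hm')
  have hderiv (t : ℝ) : HasDerivAt (fun t => ((Chebyshev.T ℝ (m + 1)).eval t / (m + 1) -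
      (Chebyshev.T ℝ (m - 1)).eval t / (m - 1)) / 2) ((Chebyshev.T ℝ m).eval t) t := by
    have hT := congrArg (eval t) (Chebyshev.T_eq_U_sub_X_mul_U ℝ m)
    have hU := congrArg (eval t) (Chebyshev.U_eq ℝ m)
    simp only [eval_sub, eval_mul, eval_X, eval_ofNat] at hT hU
    convert! ((((Chebyshev.T ℝ (m + 1)).hasDerivAt t).div_const ((m : ℝ) + 1)).sub
      (((Chebyshev.T ℝ (m - 1)).hasDerivAt t).div_const ((m : ℝ) - 1))).div_const 2 using 1
    rw [Chebyshev.T_derivative_eq_U, Chebyshev.T_derivative_eq_U, add_sub_cancel_right,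
      sub_sub, one_add_one_eq_two]
    simp only [eval_mul, eval_add, eval_sub, eval_intCast, eval_one, Int.cast_add, Int.cast_sub,
      Int.cast_one]
    rw [mul_div_cancel_left₀ _ hsucc, mul_div_cancel_left₀ _ hpred]
    linear_combination hT + hU / 2
  rw [intervalIntegral.integral_eq_sub_of_hasDerivAt (fun t _ => hderiv t)
    ((Polynomial.continuous _).intervalIntegrable _ _)]
  simp only [Chebyshev.T_eval_one, Chebyshev.T_eval_neg_one, Int.negOnePow_succ,
    Int.negOnePow_sub, Int.negOnePow_one]
  push_cast
  rw [show 1 - (m : ℝ) ^ 2 = -((m + 1) * (m - 1)) by ring]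
  field_simp
  ring

theorem abs_integral_chebyshev_T_le {m : ℤ} (hm : 2 ≤ m) :
    |∫ t in (-1 : ℝ)..1, (Chebyshev.T ℝ m).eval t| ≤ 4 / (m : ℝ) ^ 2 := by
  have hm' : (2 : ℝ) ≤ m := mod_cast hm
  have hnum : |1 + (m.negOnePow : ℝ)| ≤ 2 := by
    rcases Int.units_eq_one_or m.negOnePow with hu | hu <;> rw [hu] <;> norm_num
  have hsq : 0 < (m : ℝ) ^ 2 - 1 := by nlinarith
  rw [integral_chebyshev_T (by lia) (by lia), abs_div, abs_sub_comm, abs_of_pos hsq,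
    div_le_div_iff₀ hsq (by positivity)]
  nlinarith

namespace IsGaussRule

theorem quadratureError_chebyshev_T {n : ℕ} {x w : Fin n → ℝ} (h : IsGaussRule x w) {m : ℤ}
    (hm : m.natAbs ≤ 2 * n - 1) : quadratureError x w (Chebyshev.T ℝ m).eval = 0 := by
  rw [quadratureError, h _ (by rwa [Chebyshev.natDegree_T]), sub_self]

variable {N : ℕ} {x w : Fin (N + 1) → ℝ}

theorem isSlowlyVarying_weightPhase (h : IsGaussRule x w) (hx : StrictAnti x) (q : ℕ) :
    IsSlowlyVarying (fun k => weightPhase x q (nodeAngle x k)) (mesh (N + 1)) (40 * (q + 1)) := by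
  have hmesh := mesh_pos (N + 1)
  have hθ := h.isQuasiUniform hx
  have hnorm (k : Fin (N + 1)) {b : ℝ} (hb : Real.sin (nodeAngle x k) ≤ b) :
      ‖weightPhase x q (nodeAngle x k)‖ ≤ 40 * (q + 1) * (mesh (N + 1) * b) := by
    have hsin := Real.sin_pos_of_mem_Ioo (h.nodeAngle_mem_Ioo k)
    calc ‖weightPhase x q (nodeAngle x k)‖
        ≤ 20 * mesh (N + 1) * Real.sin (nodeAngle x k) :=
          h.norm_weightPhase_le hx q (h.nodeAngle_mem_bulk hx k)
      _ ≤ 20 * mesh (N + 1) * b := by gcongr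
      _ = 20 * (mesh (N + 1) * b) := by ring
      _ ≤ 40 * (q + 1) * (mesh (N + 1) * b) := by
          have : 0 ≤ mesh (N + 1) * b := by nlinarith
          gcongr
          linarith [(q.cast_nonneg : (0 : ℝ) ≤ q)]
  have hsin_first : Real.sin (nodeAngle x 0) ≤ mesh (N + 1) :=
    (Real.sin_le (h.nodeAngle_mem_Ioo 0).1.le).trans hθ.first_le
  have hsin_last : Real.sin (nodeAngle x (Fin.last N)) ≤ mesh (N + 1) := by
    rw [← Real.sin_pi_sub]
    exact (Real.sin_le (sub_nonneg.2 (h.nodeAngle_mem_Ioo _).2.le)).trans hθ.le_last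
  exact
    { norm_le := fun k => (hnorm k (Real.sin_le_one _)).trans_eq (by rw [mul_one])
      norm_sub_le := h.norm_weightPhase_sub_le hx q
      norm_first_le := (hnorm 0 hsin_first).trans_eq (by rw [sq])
      norm_last_le := (hnorm (Fin.last N) hsin_last).trans_eq (by rw [sq]) }

theorem re_expSum_weightPhase (h : IsGaussRule x w) (q : ℕ) (j : ℤ) :
    (expSum (nodeAngle x) (fun k => weightPhase x q (nodeAngle x k)) j).re =
      ∑ k, w k * (Chebyshev.T ℝ ((q + 1) * (2 * (N + 1) + 1) + j)).eval (x k) := by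
  rw [expSum, Complex.re_sum]
  refine sum_congr rfl fun k _ => ?_
  rw [h.weightPhase_nodeAngle, mul_assoc, ← Complex.exp_add, Complex.re_ofReal_mul,
    ← h.cos_nodeAngle k, Chebyshev.T_real_cos, ← Complex.exp_ofReal_mul_I_re]
  congr 3
  push_cast
  ring

end IsGaussRule

theorem sum_Icc_neg_eq_sum_range (n : ℕ) (F : ℤ → ℝ) :
    ∑ j ∈ Icc (-n : ℤ) n, F j = ∑ i ∈ range (2 * n + 1), F (i - n) :=
  (sum_nbij' (fun i : ℕ => (i - n : ℤ)) (fun j => (j + n).toNat)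
    (by grind) (by grind) (by grind) (by grind) (by grind)).symm

namespace IsGaussRule

theorem exists_sum_abs_sum_mul_chebyshev_T_le : ∃ K > 0, ∀ {n : ℕ} {x w : Fin n → ℝ},
    IsGaussRule x w → ∀ q : ℕ, ∑ j ∈ Icc (-n : ℤ) n,
      |∑ k, w k * (Chebyshev.T ℝ ((q + 1) * (2 * n + 1) + j)).eval (x k)| ≤ K * (q + 1) := by
  refine ⟨(π + π / 2 * (8 * π ^ 2 + (∑' j : ℤ, 1 / (j : ℝ) ^ 2) / 2 + 4 * π)) * 40,
    by positivity, fun {n x w} h q => ?_⟩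
  obtain ⟨N, rfl⟩ := Nat.exists_eq_add_one.2 h.pos
  obtain ⟨σ, hσ⟩ := h.exists_perm_strictAnti
  have h' := h.comp_equiv σ
  have hsum := (h'.isQuasiUniform hσ).sum_norm_expSum_le (h'.isSlowlyVarying_weightPhase hσ q)
    (by positivity)
  rw [← mul_assoc] at hsum
  push_cast
  refine le_trans (sum_le_sum fun j _ => ?_) hsum
  rw [← Equiv.sum_comp σ]
  exact (h'.re_expSum_weightPhase q j ▸ Complex.abs_re_le_norm _ :)

theorem exists_sum_abs_quadratureError_chebyshev_T_le : ∃ K > 0, ∀ {n : ℕ} {x w : Fin n → ℝ},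
    IsGaussRule x w → ∀ q : ℕ, ∑ i ∈ range (2 * n + 1),
      |quadratureError x w (Chebyshev.T ℝ ((n + 1 + (q * (2 * n + 1) + i) : ℕ) : ℤ)).eval| ≤
        K * (q + 1) := by
  obtain ⟨K, hK, hblock⟩ := exists_sum_abs_sum_mul_chebyshev_T_le
  refine ⟨12 + K, by positivity, fun {n x w} h q => ?_⟩
  have hn : (1 : ℝ) ≤ n := mod_cast h.pos
  have hintegral (i : ℕ) : |∫ t in (-1 : ℝ)..1,
      (Chebyshev.T ℝ ((n + 1 + (q * (2 * n + 1) + i) : ℕ) : ℤ)).eval t| ≤ 4 / (n : ℝ) ^ 2 := by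
    have := h.pos
    refine (abs_integral_chebyshev_T_le (by lia)).trans ?_
    rw [Int.cast_natCast]
    gcongr
    lia
  have hquadrature := hblock h q
  rw [sum_Icc_neg_eq_sum_range] at hquadrature
  calc ∑ i ∈ range (2 * n + 1),
        |quadratureError x w (Chebyshev.T ℝ ((n + 1 + (q * (2 * n + 1) + i) : ℕ) : ℤ)).eval|
      ≤ ∑ i ∈ range (2 * n + 1), (4 / (n : ℝ) ^ 2 +
          |∑ k, w k * (Chebyshev.T ℝ ((q + 1) * (2 * n + 1) + (i - n))).eval (x k)|) := by
        refine sum_le_sum fun i _ => (abs_sub _ _).trans (add_le_add (hintegral i) (le_of_eq ?_))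
        congr! 6
        push_cast
        ring
    _ ≤ 12 + K * (q + 1) := by
        rw [sum_add_distrib, sum_const, card_range, nsmul_eq_mul]
        refine add_le_add ?_ hquadrature
        rw [mul_div_assoc', div_le_iff₀ (by positivity)]
        push_cast
        nlinarith
    _ ≤ (12 + K) * (q + 1) := by nlinarith [(q.cast_nonneg : (0 : ℝ) ≤ q)]

end IsGaussRule

end ChebyshevModes

section ChebyshevSeries

local instance instFactTwoPiPos : Fact (0 < 2 * π) := ⟨Real.two_pi_pos⟩

variable {f : ℝ → ℝ}

/-- The even function `t ↦ f (cos t)`, as a function on the circle of length `2π`. -/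
noncomputable def cosLift (hf : ContinuousOn f (Set.Icc (-1) 1)) : C(AddCircle (2 * π), ℂ) where
  toFun := fun t : Real.Angle => (f t.cos : ℂ)
  continuous_toFun := by
    refine Complex.continuous_ofReal.comp (hf.comp_continuous Real.Angle.continuous_cos fun t => ?_)
    induction t using Real.Angle.induction_on with
    | h t => exact ⟨Real.neg_one_le_cos t, Real.cos_le_one t⟩

lemma cosLift_coe (hf : ContinuousOn f (Set.Icc (-1) 1)) (t : ℝ) :
    cosLift hf (t : AddCircle (2 * π)) = f (Real.cos t) := rfl

lemma fourier_add_fourier_neg (n : ℤ) (t : ℝ) :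
    fourier n (t : AddCircle (2 * π)) + fourier (-n) (t : AddCircle (2 * π)) =
      2 * (Real.cos (n * t) : ℂ) := by
  have hπ : (π : ℂ) ≠ 0 := mod_cast Real.pi_ne_zero
  rw [fourier_coe_apply, fourier_coe_apply, Complex.ofReal_cos, Complex.two_cos]
  push_cast
  congr 2 <;> field_simp

lemma integral_neg_self_eq {E : Type*} [NormedAddCommGroup E] [NormedSpace ℝ E] {F : ℝ → E}
    {a : ℝ} (hF : Continuous F) : ∫ t in -a..a, F t = ∫ t in 0..a, (F t + F (-t)) := by
  rw [intervalIntegral.integral_add (hF.intervalIntegrable _ _)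
      (Continuous.intervalIntegrable (by fun_prop) _ _), intervalIntegral.integral_comp_neg,
    neg_zero, add_comm,
    intervalIntegral.integral_add_adjacent_intervals (hF.intervalIntegrable _ _)
      (hF.intervalIntegrable _ _)]

theorem fourierCoeff_cosLift (hf : ContinuousOn f (Set.Icc (-1) 1)) (n : ℤ) :
    fourierCoeff (cosLift hf) n = (chebCoeff f n.natAbs / 2 : ℝ) := by
  have hpair (t : ℝ) : fourier (-n) (t : AddCircle (2 * π)) • cosLift hf t +
      fourier (-n) ((-t : ℝ) : AddCircle (2 * π)) • cosLift hf ((-t : ℝ) : AddCircle (2 * π)) =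
      (2 * (f (Real.cos t) * Real.cos (n.natAbs * t)) : ℝ) := by
    have hreflect : fourier (-n) ((-t : ℝ) : AddCircle (2 * π)) =
        fourier n (t : AddCircle (2 * π)) := by
      simp only [fourier_coe_apply]
      push_cast
      ring_nf
    have habs : Real.cos (n.natAbs * t) = Real.cos (n * t) := by
      rcases n.natAbs_eq with hn | hn <;> rw [hn] <;> simp
    rw [hreflect, cosLift_coe, cosLift_coe, Real.cos_neg, ← add_smul, add_comm,
      fourier_add_fourier_neg, habs, smul_eq_mul]
    push_cast
    ring
  rw [fourierCoeff_eq_intervalIntegral _ n (-π), show -π + 2 * π = π by ring,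
    integral_neg_self_eq (by fun_prop)]
  simp only [hpair]
  rw [intervalIntegral.integral_ofReal, intervalIntegral.integral_const_mul, chebCoeff,
    Complex.real_smul, ← Complex.ofReal_mul]
  congr 1
  ring

theorem hasSum_chebCoeff_mul_cos (hf : ContinuousOn f (Set.Icc (-1) 1))
    (hsum : Summable fun m => |chebCoeff f m|) (t : ℝ) :
    HasSum (fun m : ℕ => chebCoeff f m * Real.cos (m * t))
      (f (Real.cos t) + chebCoeff f 0 / 2) := by
  have hhalf : Summable fun m : ℕ => ((chebCoeff f m / 2 : ℝ) : ℂ) :=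
    Complex.summable_ofReal.2 (hsum.of_abs.div_const 2)
  have hcoeff : Summable (fourierCoeff (cosLift hf)) := by
    refine Summable.of_nat_of_neg ?_ ?_ <;> simpa [fourierCoeff_cosLift] using hhalf
  have hseries := (has_pointwise_sum_fourier_series_of_summable hcoeff
    (t : AddCircle (2 * π))).nat_add_neg
  simp only [fourierCoeff_cosLift, Int.natAbs_neg, ← smul_add, fourier_add_fourier_neg] at hseries
  rw [← Complex.hasSum_ofReal]
  convert! hseries using 1
  · ext m
    push_cast [smul_eq_mul, Int.natAbs_natCast]
    ring
  · simp [cosLift_coe]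

theorem hasSum_chebCoeff_mul_chebyshev_T (hf : ContinuousOn f (Set.Icc (-1) 1))
    (hsum : Summable fun m => |chebCoeff f m|) {t : ℝ} (ht : |t| ≤ 1) :
    HasSum (fun m : ℕ => chebCoeff f m * (Chebyshev.T ℝ m).eval t) (f t + chebCoeff f 0 / 2) := by
  obtain ⟨hlo, hhi⟩ := abs_le.1 ht
  have hcos := Real.cos_arccos hlo hhi
  simpa only [hcos, ← Int.cast_natCast (R := ℝ), ← Chebyshev.T_real_cos] using
    hasSum_chebCoeff_mul_cos hf hsum (Real.arccos t)

theorem hasSum_chebCoeff_mul_integral (hf : ContinuousOn f (Set.Icc (-1) 1))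
    (hsum : Summable fun m => |chebCoeff f m|) :
    HasSum (fun m : ℕ => chebCoeff f m * ∫ t in (-1 : ℝ)..1, (Chebyshev.T ℝ m).eval t)
      ((∫ t in (-1 : ℝ)..1, f t) + chebCoeff f 0) := by
  have hmem {t : ℝ} (ht : t ∈ Set.uIoc (-1 : ℝ) 1) : |t| ≤ 1 := by
    rw [Set.uIoc_of_le (by norm_num)] at ht
    exact abs_le.2 ⟨ht.1.le, ht.2⟩
  have hf' : IntervalIntegrable f MeasureTheory.volume (-1) 1 :=
    ContinuousOn.intervalIntegrable (by rwa [Set.uIcc_of_le (by norm_num)])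
  convert! intervalIntegral.hasSum_integral_of_dominated_convergence (a := -1) (b := 1)
    (μ := MeasureTheory.volume) (F := fun m t => chebCoeff f m * (Chebyshev.T ℝ m).eval t)
    (fun m _ => |chebCoeff f m|)
    (fun m => (by fun_prop : Continuous _).aestronglyMeasurable)
    (fun m => .of_forall fun t ht => ?_) (.of_forall fun _ _ => hsum) intervalIntegrable_const
    (.of_forall fun t ht => hasSum_chebCoeff_mul_chebyshev_T hf hsum (hmem ht)) using 1
  · simp only [intervalIntegral.integral_const_mul]
  · rw [intervalIntegral.integral_add hf' intervalIntegrable_const,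
      intervalIntegral.integral_const, smul_eq_mul]
    ring
  · rw [Real.norm_eq_abs, abs_mul]
    exact mul_le_of_le_one_right (abs_nonneg _) (Chebyshev.abs_eval_T_real_le_one m (hmem ht))

theorem hasSum_chebCoeff_mul_quadratureError (hf : ContinuousOn f (Set.Icc (-1) 1))
    (hsum : Summable fun m => |chebCoeff f m|) {n : ℕ} {x w : Fin n → ℝ} (hx : ∀ k, |x k| ≤ 1)
    (hw : ∑ k, w k = 2) :
    HasSum (fun m : ℕ => chebCoeff f m * quadratureError x w (Chebyshev.T ℝ m).eval)
      (quadratureError x w f) := by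
  convert! (hasSum_chebCoeff_mul_integral hf hsum).sub (hasSum_sum (s := univ) fun k _ =>
    (hasSum_chebCoeff_mul_chebyshev_T hf hsum (hx k)).mul_left (w k)) using 1
  · ext m
    simp only [quadratureError, mul_sub, mul_sum, mul_left_comm (w _)]
  · simp only [quadratureError, mul_add, sum_add_distrib, ← sum_mul, hw]
    ring

end ChebyshevSeries

section Rate

theorem norm_le_of_hasSum_of_sum_norm_le {E : Type*} [SeminormedAddCommGroup E] {u : ℕ → E}
    {a : E} {b : ℕ → ℝ} {B : ℝ} {d p : ℕ} [NeZero p] (hu : HasSum u a)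
    (hzero : ∀ m < d, u m = 0) (hb : HasSum b B)
    (hblock : ∀ q, ∑ i ∈ range p, ‖u (d + (q * p + i))‖ ≤ b q) : ‖a‖ ≤ B := by
  have htail : HasSum (fun m => u (d + m)) a := by
    have := (hasSum_nat_add_iff' d).2 hu
    rw [sum_eq_zero fun m hm => hzero m (mem_range.1 hm), sub_zero] at this
    simpa only [add_comm d] using this
  have hblocks : HasSum (fun q => ∑ i : Fin p, u (d + (q * p + i))) a :=
    ((Nat.divModEquiv p).symm.hasSum_iff.2 htail).prod_fiberwise fun q => hasSum_fintype _
  refine hblocks.norm_le_of_bounded hb fun q => ?_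
  rw [Fin.sum_univ_eq_sum_range fun i => u (d + (q * p + i))]
  exact (norm_sum_le _ _).trans (hblock q)

lemma summable_abs_of_le_mul_rpow {a : ℕ → ℝ} {A r : ℝ} (hr : r < -1)
    (ha : ∀ m : ℕ, 1 ≤ m → |a m| ≤ A * (m : ℝ) ^ r) : Summable fun m => |a m| := by
  refine (summable_nat_add_iff 1).1 (.of_nonneg_of_le (fun _ => abs_nonneg _)
    (fun m => ha (m + 1) m.succ_pos) ?_)
  exact ((summable_nat_add_iff 1).2 (Real.summable_nat_rpow.2 hr)).mul_left A

lemma sum_abs_mul_le_of_le_mul_rpow {a e : ℕ → ℝ} {A K s : ℝ} {n q : ℕ} (hs : -1 ≤ s)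
    (hn : 0 < n) (ha : ∀ m : ℕ, 1 ≤ m → |a m| ≤ A * (m : ℝ) ^ (-s - 1))
    (he : ∑ i ∈ range (2 * n + 1), |e (n + 1 + (q * (2 * n + 1) + i))| ≤ K * (q + 1)) :
    ∑ i ∈ range (2 * n + 1),
      |a (n + 1 + (q * (2 * n + 1) + i)) * e (n + 1 + (q * (2 * n + 1) + i))| ≤
        A * K * (n : ℝ) ^ (-s - 1) * (q + 1 : ℝ) ^ (-s) := by
  have hA : 0 ≤ A := by simpa using (abs_nonneg _).trans (ha 1 le_rfl)
  have hcoeff (i : ℕ) : |a (n + 1 + (q * (2 * n + 1) + i))| ≤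
      A * ((q + 1 : ℝ) ^ (-s - 1) * (n : ℝ) ^ (-s - 1)) := by
    rw [← Real.mul_rpow (by positivity) (by positivity)]
    refine (ha _ (by lia)).trans (mul_le_mul_of_nonneg_left ?_ hA)
    refine Real.rpow_le_rpow_of_nonpos (by positivity) ?_ (by linarith)
    push_cast
    nlinarith [(q.cast_nonneg : (0 : ℝ) ≤ q), (n.cast_nonneg : (0 : ℝ) ≤ n),
      (i.cast_nonneg : (0 : ℝ) ≤ i), mul_nonneg (q.cast_nonneg : (0 : ℝ) ≤ q) (n.cast_nonneg)]
  simp only [abs_mul]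
  calc _ ≤ ∑ i ∈ range (2 * n + 1), A * ((q + 1 : ℝ) ^ (-s - 1) * (n : ℝ) ^ (-s - 1)) *
        |e (n + 1 + (q * (2 * n + 1) + i))| := by
        gcongr with i
        exact hcoeff i
    _ ≤ A * ((q + 1 : ℝ) ^ (-s - 1) * (n : ℝ) ^ (-s - 1)) * (K * (q + 1)) := by
        rw [← mul_sum]
        gcongr
    _ = A * K * (n : ℝ) ^ (-s - 1) * (q + 1 : ℝ) ^ (-s) := by
        rw [Real.rpow_sub_one (by positivity : (q + 1 : ℝ) ≠ 0)]
        field_simp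

theorem gauss_rate_general (s : ℝ) (hs : 1 < s) (f : ℝ → ℝ)
    (hf : ContinuousOn f (Set.Icc (-1) 1))
    (hXs : ∃ A : ℝ, ∀ m : ℕ, 1 ≤ m → |chebCoeff f m| ≤ A * (m : ℝ) ^ (-s - 1)) :
    ∃ C > 0, ∀ n : ℕ, ∀ x w : Fin n → ℝ, IsGaussRule x w →
      |quadratureError x w f| ≤ C * (n : ℝ) ^ (-s - 1) := by
  obtain ⟨A, hA⟩ := hXs
  obtain ⟨K, hK, hblock⟩ := IsGaussRule.exists_sum_abs_quadratureError_chebyshev_T_le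
  have hzeta : Summable fun q : ℕ => (q + 1 : ℝ) ^ (-s) := by
    simpa using (summable_nat_add_iff 1).2 (Real.summable_nat_rpow.2 (neg_lt_neg hs))
  have hsum := summable_abs_of_le_mul_rpow (by linarith) hA
  have hA0 : 0 ≤ A := by simpa using (abs_nonneg _).trans (hA 1 le_rfl)
  refine ⟨A * K * (∑' q : ℕ, (q + 1 : ℝ) ^ (-s)) + 1, by positivity, fun n x w h => ?_⟩
  have hseries := hasSum_chebCoeff_mul_quadratureError hf hsum
    (fun k => (h.abs_node_lt_one k).le) h.sum_weights
  have hzero (m : ℕ) (hm : m < n + 1) :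
      chebCoeff f m * quadratureError x w (Chebyshev.T ℝ m).eval = 0 := by
    rw [h.quadratureError_chebyshev_T (by have := h.pos; lia), mul_zero]
  have hbound : |quadratureError x w f| ≤
      A * K * (n : ℝ) ^ (-s - 1) * ∑' q : ℕ, (q + 1 : ℝ) ^ (-s) :=
    norm_le_of_hasSum_of_sum_norm_le hseries hzero (hzeta.hasSum.mul_left _) fun q =>
      sum_abs_mul_le_of_le_mul_rpow (e := fun m => quadratureError x w (Chebyshev.T ℝ m).eval)
        (by linarith) h.pos hA (hblock h q)
  refine hbound.trans ?_
  rw [add_mul, mul_right_comm]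
  exact le_add_of_nonneg_right (by positivity)

end Rate

/-- If `f` is continuous on `[-1,1]` and of class `X^s` with `s ≥ 2`, then the error of the
`n`-point Gauss rule is `O(n^{-s-1})`. -/
theorem gauss_rate (s : ℝ) (hs : 2 ≤ s) (f : ℝ → ℝ)
    (hf : ContinuousOn f (Set.Icc (-1) 1))
    (hXs : ∃ A : ℝ, ∀ m : ℕ, 1 ≤ m → |chebCoeff f m| ≤ A * (m : ℝ) ^ (-s - 1)) :
    ∃ C > 0, ∀ n : ℕ, 1 ≤ n → ∀ x w : Fin n → ℝ,
      (∀ k, x k ∈ Set.Icc (-1:ℝ) 1) → (∀ k, 0 < w k) →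
      (∀ p : Polynomial ℝ, p.natDegree ≤ 2 * n - 1 →
        ∑ k : Fin n, w k * p.eval (x k) = ∫ t in (-1:ℝ)..1, p.eval t) →
      |(∫ t in (-1:ℝ)..1, f t) - ∑ k : Fin n, w k * f (x k)| ≤ C * (n : ℝ) ^ (-s - 1) := by
  obtain ⟨C, hC, h⟩ := gauss_rate_general s (by linarith) f hf hXs
  exact ⟨C, hC, fun n _ x w _ _ hex => h n x w hex⟩
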